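/- arXiv:2310.11694 — 3 statements merged into one kernel-verified Lean document; each statement's English description precedes it below -/
import Mathlib

section
/- There exist constants ε₀, ν₀ ∈ (0,1) and C > 0, independent of ν, k, λ and ε, such that for every 0 < ν ≤ ν₀, every 0 < ε ≤ ε₀, every k = (k₁,k₃) ∈ ℤ² with |k₁| ≥ 1, every λ ∈ ℝ, every F ∈ L²(I), and every solution w ∈ H¹(I) of the ε-modified Orr–Sommerfeld problem with Navier-slip boundary conditions and right-hand side F, one has ν‖w'‖_{L²} + ν^{3/4}|k₁|^{1/4}‖w‖_{L²} ≤ C ‖F‖_{H⁻¹_k}. -/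
open Real MeasureTheory

noncomputable section

/-- `|k| = sqrt (k₁² + k₃²)` for `k = (k₁,k₃) ∈ ℤ²`. -/
def kabs (k₁ k₃ : ℤ) : ℝ := Real.sqrt ((k₁ : ℝ) ^ 2 + (k₃ : ℝ) ^ 2)

/-- The `L²` norm on the interval `(-1,1)`. -/
def l2 (f : ℝ → ℂ) : ℝ := Real.sqrt (∫ y in (-1:ℝ)..1, ‖f y‖ ^ 2)

/-- `‖g‖_{H¹_k} = (‖g'‖² + |k|²‖g‖²)^{1/2}`. -/
def hk (k₁ k₃ : ℤ) (f : ℝ → ℂ) : ℝ :=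
  Real.sqrt ((∫ y in (-1:ℝ)..1, ‖deriv f y‖ ^ 2) +
    (kabs k₁ k₃) ^ 2 * ∫ y in (-1:ℝ)..1, ‖f y‖ ^ 2)

/-- The dual norm `‖F‖_{H⁻¹_k} = sup { |∫ F ḡ| : g ∈ H¹₀, ‖g‖_{H¹_k} ≤ 1 }`. -/
def hm1 (k₁ k₃ : ℤ) (F : ℝ → ℂ) : ℝ :=
  sSup { r : ℝ | ∃ g : ℝ → ℂ, ContDiff ℝ 1 g ∧ g (-1) = 0 ∧ g 1 = 0 ∧
      hk k₁ k₃ g ≤ 1 ∧ r = ‖∫ y in (-1:ℝ)..1, F y * (starRingEnd ℂ) (g y)‖ }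

/-- The `ε`-modified Orr–Sommerfeld problem with Navier-slip boundary
conditions: `-ν(∂_y²-|k|²)w + ik₁[(1-y²-λ)w + 2φ] - ε(ν|k₁|)^{1/2}w = F`
on `[-1,1]`, with `(∂_y²-|k|²)φ = w`, `φ(±1) = φ''(±1) = 0`. -/
def OSslipE (ν : ℝ) (k₁ k₃ : ℤ) (lam : ℂ) (ε : ℝ) (w φ F : ℝ → ℂ) : Prop :=
  ContDiff ℝ 2 w ∧ ContDiff ℝ 2 φ ∧
  (∀ y ∈ Set.Icc (-1:ℝ) 1,
    -(ν : ℂ) * (deriv (deriv w) y - ((kabs k₁ k₃ : ℝ) : ℂ) ^ 2 * w y) +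
      Complex.I * (k₁ : ℂ) * ((1 - (y : ℂ) ^ 2 - lam) * w y + 2 * φ y) -
      ((ε * Real.sqrt (ν * |(k₁ : ℝ)|) : ℝ) : ℂ) * w y = F y) ∧
  (∀ y ∈ Set.Icc (-1:ℝ) 1,
    deriv (deriv φ) y - ((kabs k₁ k₃ : ℝ) : ℂ) ^ 2 * φ y = w y) ∧
  φ (-1) = 0 ∧ φ 1 = 0 ∧ deriv (deriv φ) (-1) = 0 ∧ deriv (deriv φ) 1 = 0


set_option linter.unusedSimpArgs false


lemma lin_ode {E : Type*} [NormedAddCommGroup E] [NormedSpace ℝ E] [CompleteSpace E]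
    (f : ℝ → E → E) (hf : Continuous (fun z : ℝ × E => f z.1 z.2)) (K : ℝ) (hK : 0 < K)
    (hL : ∀ t ∈ Set.Icc (-1:ℝ) 1, ∀ x y, ‖f t x - f t y‖ ≤ K * ‖x - y‖) (Y0 : E) :
    ∃ Y g : ℝ → E, Continuous g ∧ (∀ t, HasDerivAt Y (g t) t) ∧ Y (-1) = Y0 ∧
      ∀ t ∈ Set.Icc (-1:ℝ) 1, g t = f t (Y t) := by
  have h11 : (-1:ℝ) ≤ 1 := by norm_num
  let pr : ℝ → Set.Icc (-1:ℝ) 1 := Set.projIcc (-1) 1 h11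
  have hpr : Continuous pr := continuous_projIcc
  let G : C(Set.Icc (-1:ℝ) 1, E) → ℝ → E := fun Z s => f s (Real.exp (2 * K * (s + 1)) • Z (pr s))
  have hG : ∀ Z, Continuous (G Z) := fun Z => by
    have h1 : Continuous (fun s : ℝ => (s, Real.exp (2 * K * (s + 1)) • Z (pr s))) := by fun_prop
    exact hf.comp h1
  let I : C(Set.Icc (-1:ℝ) 1, E) → ℝ → E := fun Z t => Y0 + ∫ s in (-1:ℝ)..t, G Z s
  have hI : ∀ Z t, HasDerivAt (I Z) (G Z t) t := fun Z t =>
    (intervalIntegral.integral_hasDerivAt_right ((hG Z).intervalIntegrable _ _)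
      ((hG Z).stronglyMeasurableAtFilter _ _) (hG Z).continuousAt).const_add Y0
  have hIc : ∀ Z, Continuous (I Z) := fun Z =>
    continuous_iff_continuousAt.2 fun t => (hI Z t).continuousAt
  let Φ : C(Set.Icc (-1:ℝ) 1, E) → C(Set.Icc (-1:ℝ) 1, E) := fun Z =>
    ⟨fun t => Real.exp (-(2 * K * ((t:ℝ) + 1))) • I Z t, by
      have := hIc Z
      fun_prop⟩
  have hΦ : ContractingWith (1/2) Φ := by
    refine ⟨by rw [← NNReal.coe_lt_coe]; norm_num, LipschitzWith.of_dist_le_mul fun Z W => ?_⟩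
    rw [ContinuousMap.dist_le (by positivity)]
    intro t
    have ht := t.2
    have key : ‖I Z t - I W t‖ ≤ ∫ s in (-1:ℝ)..t, K * (Real.exp (2 * K * (s + 1)) * dist Z W) := by
      have : I Z t - I W t = ∫ s in (-1:ℝ)..t, (G Z s - G W s) := by
        rw [intervalIntegral.integral_sub ((hG Z).intervalIntegrable _ _) ((hG W).intervalIntegrable _ _)]
        simp [I]
      rw [this]
      refine intervalIntegral.norm_integral_le_of_norm_le ht.1 ?_ (by
        apply Continuous.intervalIntegrable; fun_prop)
      refine Filter.Eventually.of_forall fun s hs => ?_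
      refine (hL s ⟨hs.1.le, hs.2.trans ht.2⟩ _ _).trans ?_
      rw [← smul_sub, norm_smul, Real.norm_of_nonneg (Real.exp_pos _).le, ← dist_eq_norm]
      gcongr
      exact ContinuousMap.dist_apply_le_dist _
    have e1 : ∫ s in (-1:ℝ)..t, K * (Real.exp (2 * K * (s + 1)) * dist Z W)
        = (Real.exp (2 * K * (t + 1)) - 1) / 2 * dist Z W := by
      have hd : ∀ s ∈ Set.uIcc (-1:ℝ) t, HasDerivAt (fun s => Real.exp (2 * K * (s + 1)) / 2 * dist Z W)
          (K * (Real.exp (2 * K * (s + 1)) * dist Z W)) s := by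
        intro s _
        have h0 : HasDerivAt (fun s : ℝ => 2 * K * (s + 1)) (2 * K * 1) s :=
          ((hasDerivAt_id s).add_const 1).const_mul _
        have := ((h0.exp.div_const 2).mul_const (dist Z W))
        convert! this using 1
        ring
      rw [intervalIntegral.integral_eq_sub_of_hasDerivAt hd (by
        apply Continuous.intervalIntegrable; fun_prop)]
      norm_num
      ring
    rw [e1] at key
    have e2 : dist (Φ Z t) (Φ W t) = Real.exp (-(2 * K * ((t:ℝ) + 1))) * ‖I Z t - I W t‖ := by
      simp only [Φ, ContinuousMap.coe_mk]
      rw [dist_eq_norm, ← smul_sub, norm_smul, Real.norm_of_nonneg (Real.exp_pos _).le]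
    rw [e2]
    calc _ ≤ Real.exp (-(2 * K * ((t:ℝ) + 1))) * ((Real.exp (2 * K * (t + 1)) - 1) / 2 * dist Z W) := by
            gcongr
      _ = (1 - Real.exp (-(2 * K * ((t:ℝ) + 1)))) / 2 * dist Z W := by
            rw [Real.exp_neg]; field_simp
      _ ≤ _ := by
            have := Real.exp_pos (-(2 * K * ((t:ℝ) + 1)))
            push_cast
            gcongr
            linarith
  let Z := hΦ.fixedPoint
  have hZ : Φ Z = Z := hΦ.fixedPoint_isFixedPt
  refine ⟨I Z, G Z, hG Z, hI Z, by simp [I], fun t ht => ?_⟩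
  have hz : Z (pr t) = Real.exp (-(2 * K * (t + 1))) • I Z t := by
    conv_lhs => rw [← hZ]
    simp [Φ, pr, Set.projIcc_of_mem h11 ht]
  show f t (Real.exp (2 * K * (t + 1)) • Z (pr t)) = _
  rw [hz, smul_smul, ← Real.exp_add]
  simp


lemma int_eq (G g u v : ℝ → ℝ) (hG : ∀ y ∈ Set.Icc (-1:ℝ) 1, HasDerivAt G (g y) y)
    (hb : G 1 = G (-1)) (hu : Continuous u) (hv : Continuous v)
    (h : ∀ y ∈ Set.Icc (-1:ℝ) 1, g y = u y - v y) :
    (∫ y in (-1:ℝ)..1, u y) = ∫ y in (-1:ℝ)..1, v y := by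
  have h11 : (-1:ℝ) ≤ 1 := by norm_num
  have h1 : (∫ y in (-1:ℝ)..1, (u y - v y)) = G 1 - G (-1) := by
    apply intervalIntegral.integral_eq_sub_of_hasDerivAt
    · intro y hy
      rw [Set.uIcc_of_le h11] at hy
      rw [← h y hy]; exact hG y hy
    · exact (hu.sub hv).intervalIntegrable _ _
  rw [intervalIntegral.integral_sub (hu.intervalIntegrable _ _) (hv.intervalIntegrable _ _)] at h1
  linarith

lemma int_le (G g u v : ℝ → ℝ) (hG : ∀ y ∈ Set.Icc (-1:ℝ) 1, HasDerivAt G (g y) y)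
    (hb : G 1 = G (-1)) (hg : Continuous g) (hu : Continuous u) (hv : Continuous v)
    (h : ∀ y ∈ Set.Icc (-1:ℝ) 1, u y ≤ v y + g y) :
    (∫ y in (-1:ℝ)..1, u y) ≤ ∫ y in (-1:ℝ)..1, v y := by
  have h11 : (-1:ℝ) ≤ 1 := by norm_num
  have h1 := int_eq G g (fun y => v y + g y) v hG hb (hv.add hg) hv (fun y _ => by simp)
  rw [← h1]
  exact intervalIntegral.integral_mono_on h11 (hu.intervalIntegrable _ _)
    ((hv.add hg).intervalIntegrable _ _) h

/-- L2 norm of a pair. -/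
noncomputable def nn (u v : ℝ → ℝ) : ℝ := √(∫ y in (-1:ℝ)..1, (u y ^ 2 + v y ^ 2))

lemma nn_nonneg (u v : ℝ → ℝ) : 0 ≤ nn u v := Real.sqrt_nonneg _

lemma nn_sq (u v : ℝ → ℝ) : nn u v ^ 2 = ∫ y in (-1:ℝ)..1, (u y ^ 2 + v y ^ 2) :=
  Real.sq_sqrt (intervalIntegral.integral_nonneg (by norm_num) fun y _ => by positivity)

lemma cs (u1 u2 v1 v2 : ℝ → ℝ) (h1 : Continuous u1) (h2 : Continuous u2) (h3 : Continuous v1)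
    (h4 : Continuous v2) :
    |∫ y in (-1:ℝ)..1, (u1 y * v1 y + u2 y * v2 y)| ≤ nn u1 u2 * nn v1 v2 := by
  set B := ∫ y in (-1:ℝ)..1, (u1 y * v1 y + u2 y * v2 y)
  have key : ∀ t : ℝ, 0 ≤ nn v1 v2 ^ 2 * (t * t) + (2 * B) * t + nn u1 u2 ^ 2 := by
    intro t
    have e : nn v1 v2 ^ 2 * (t * t) + (2 * B) * t + nn u1 u2 ^ 2 =
        ∫ y in (-1:ℝ)..1, ((v1 y ^ 2 + v2 y ^ 2) * (t * t) + (2 * (u1 y * v1 y + u2 y * v2 y)) * t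
          + (u1 y ^ 2 + u2 y ^ 2)) := by
      rw [intervalIntegral.integral_add, intervalIntegral.integral_add,
        intervalIntegral.integral_mul_const, intervalIntegral.integral_mul_const,
        intervalIntegral.integral_const_mul, nn_sq, nn_sq]
      all_goals apply Continuous.intervalIntegrable; fun_prop
    rw [e]
    apply intervalIntegral.integral_nonneg (by norm_num)
    intro y _
    nlinarith [sq_nonneg (u1 y + t * v1 y), sq_nonneg (u2 y + t * v2 y)]
  have hd := discrim_le_zero key
  rw [discrim] at hd
  apply abs_le_of_sq_le_sq _ (mul_nonneg (nn_nonneg _ _) (nn_nonneg _ _))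
  nlinarith

lemma lin4 (c1 c2 c3 c4 : ℝ) (u1 u2 u3 u4 : ℝ → ℝ) (h1 : Continuous u1) (h2 : Continuous u2)
    (h3 : Continuous u3) (h4 : Continuous u4) :
    (∫ y in (-1:ℝ)..1, (c1 * u1 y + c2 * u2 y + c3 * u3 y + c4 * u4 y)) =
    c1 * (∫ y in (-1:ℝ)..1, u1 y) + c2 * (∫ y in (-1:ℝ)..1, u2 y) + c3 * (∫ y in (-1:ℝ)..1, u3 y) +
      c4 * (∫ y in (-1:ℝ)..1, u4 y) := by
  simp only [← intervalIntegral.integral_const_mul]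
  rw [intervalIntegral.integral_add, intervalIntegral.integral_add, intervalIntegral.integral_add]
  all_goals apply Continuous.intervalIntegrable; fun_prop

structure Pair (K : ℝ) (a a1 a2 p p1 : ℝ → ℝ) : Prop where
  ca : Continuous a
  ca1 : Continuous a1
  ca2 : Continuous a2
  cp : Continuous p
  cp1 : Continuous p1
  da : ∀ y ∈ Set.Icc (-1:ℝ) 1, HasDerivAt a (a1 y) y
  da1 : ∀ y ∈ Set.Icc (-1:ℝ) 1, HasDerivAt a1 (a2 y) y
  dp : ∀ y ∈ Set.Icc (-1:ℝ) 1, HasDerivAt p (p1 y) y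
  dp1 : ∀ y ∈ Set.Icc (-1:ℝ) 1, HasDerivAt p1 (a y + K * p y) y
  al : a (-1) = 0
  ar : a 1 = 0
  pl : p (-1) = 0
  pr : p 1 = 0

section
variable {K : ℝ} {a a1 a2 p p1 b b1 b2 q q1 : ℝ → ℝ}

lemma e1 (A : Pair K a a1 a2 p p1) (B : Pair K b b1 b2 q q1) (fr fi : ℝ → ℝ) (hfr : Continuous fr)
    (hfi : Continuous fi) (al d2 D e : ℝ)
    (h1 : ∀ y ∈ Set.Icc (-1:ℝ) 1, fr y = -al * ((d2 - y^2) * b y + 2 * q y) - D * (a2 y - K * a y)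
      - e * a y)
    (h2 : ∀ y ∈ Set.Icc (-1:ℝ) 1, fi y = al * ((d2 - y^2) * a y + 2 * p y) - D * (b2 y - K * b y)
      - e * b y) :
    (∫ y in (-1:ℝ)..1, (fr y * a y + fi y * b y)) =
      D * (nn a1 b1 ^ 2 + K * nn a b ^ 2) - e * nn a b ^ 2 := by
  have := A.ca; have := A.ca1; have := A.ca2; have := A.cp; have := A.cp1
  have := B.ca; have := B.ca1; have := B.ca2; have := B.cp; have := B.cp1
  have e : D * (nn a1 b1 ^ 2 + K * nn a b ^ 2) - e * nn a b ^ 2 = ∫ y in (-1:ℝ)..1,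
      (D * ((a1 y ^ 2 + b1 y ^ 2) + K * (a y ^ 2 + b y ^ 2)) - e * (a y ^ 2 + b y ^ 2)) := by
    rw [intervalIntegral.integral_sub, intervalIntegral.integral_const_mul,
      intervalIntegral.integral_const_mul, intervalIntegral.integral_add,
      intervalIntegral.integral_const_mul, nn_sq, nn_sq]
    all_goals apply Continuous.intervalIntegrable; fun_prop
  rw [e]
  apply int_eq (fun y => 2 * al * (p y * q1 y - q y * p1 y) - D * (a y * a1 y + b y * b1 y)) _ _ _
    (fun y hy => (((((A.dp y hy).mul (B.dp1 y hy)).sub ((B.dp y hy).mul (A.dp1 y hy))).const_mul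
      (2 * al)).sub
      ((((A.da y hy).mul (A.da1 y hy)).add ((B.da y hy).mul (B.da1 y hy))).const_mul D)))
  · simp [A.al, A.ar, A.pl, A.pr, B.al, B.ar, B.pl, B.pr]
  · fun_prop
  · fun_prop
  · intro y hy
    rw [h1 y hy, h2 y hy]
    ring

lemma e2 (A : Pair K a a1 a2 p p1) (B : Pair K b b1 b2 q q1) (fr fi : ℝ → ℝ) (hfr : Continuous fr)
    (hfi : Continuous fi) (al d2 D e : ℝ)
    (h1 : ∀ y ∈ Set.Icc (-1:ℝ) 1, fr y = -al * ((d2 - y^2) * b y + 2 * q y) - D * (a2 y - K * a y)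
      - e * a y)
    (h2 : ∀ y ∈ Set.Icc (-1:ℝ) 1, fi y = al * ((d2 - y^2) * a y + 2 * p y) - D * (b2 y - K * b y)
      - e * b y) :
    (∫ y in (-1:ℝ)..1, (fr y * (a2 y - K * a y) + fi y * (b2 y - K * b y))) =
      e * (nn a1 b1 ^ 2 + K * nn a b ^ 2) - D * nn (fun y => a2 y - K * a y)
        (fun y => b2 y - K * b y) ^ 2
      + 2 * al * (∫ y in (-1:ℝ)..1, ((y * a y) * b1 y + (y * b y) * (-a1 y))) := by
  have := A.ca; have := A.ca1; have := A.ca2; have := A.cp; have := A.cp1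
  have := B.ca; have := B.ca1; have := B.ca2; have := B.cp; have := B.cp1
  simp only [nn_sq]
  refine Eq.trans ?_ ((lin4 e (e * K) (-D) (2 * al) (fun y => a1 y ^ 2 + b1 y ^ 2)
    (fun y => a y ^ 2 + b y ^ 2) (fun y => (a2 y - K * a y)^2 + (b2 y - K * b y)^2)
    (fun y => (y * a y) * b1 y + (y * b y) * (-a1 y)) (by fun_prop) (by fun_prop) (by fun_prop)
    (by fun_prop)).trans (by ring))
  have hy2 : ∀ y : ℝ, HasDerivAt (fun y : ℝ => d2 - y^2) (-(2*y)) y := fun y => by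
    simpa using (hasDerivAt_pow 2 y).const_sub d2
  apply int_eq (fun y => al * ((d2 - y^2) * (a y * b1 y - b y * a1 y)) +
      (2 * al) * ((p y * b1 y - p1 y * b y) - (q y * a1 y - q1 y * a y)) -
      e * (a y * a1 y + b y * b1 y)) _ _ _
    (fun y hy => ((((hy2 y).mul (((A.da y hy).mul (B.da1 y hy)).sub ((B.da y hy).mul
      (A.da1 y hy)))).const_mul al).add (((((A.dp y hy).mul (B.da1 y hy)).sub ((A.dp1 y hy).mul
      (B.da y hy))).sub (((B.dp y hy).mul (A.da1 y hy)).sub ((B.dp1 y hy).mul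
      (A.da y hy)))).const_mul (2*al))).sub
      ((((A.da y hy).mul (A.da1 y hy)).add ((B.da y hy).mul (B.da1 y hy))).const_mul e))
  · simp [A.al, A.ar, A.pl, A.pr, B.al, B.ar, B.pl, B.pr]
  · fun_prop
  · fun_prop
  · intro y hy
    rw [h1 y hy, h2 y hy]
    simp only [Pi.mul_apply, Pi.sub_apply]
    ring

lemma e3 (A : Pair K a a1 a2 p p1) (B : Pair K b b1 b2 q q1) (fr fi : ℝ → ℝ) (hfr : Continuous fr)
    (hfi : Continuous fi) (al d2 D e : ℝ) (hal : al ^ 2 = 1)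
    (h1 : ∀ y ∈ Set.Icc (-1:ℝ) 1, fr y = -al * ((d2 - y^2) * b y + 2 * q y) - D * (a2 y - K * a y)
      - e * a y)
    (h2 : ∀ y ∈ Set.Icc (-1:ℝ) 1, fi y = al * ((d2 - y^2) * a y + 2 * p y) - D * (b2 y - K * b y)
      - e * b y) :
    al * (∫ y in (-1:ℝ)..1, (fi y * a y + fr y * (- b y))) =
      d2 * nn a b ^ 2 - nn (fun y => y * a y) (fun y => y * b y) ^ 2 -
        2 * (nn p1 q1 ^ 2 + K * nn p q ^ 2) := by
  have := A.ca; have := A.ca1; have := A.ca2; have := A.cp; have := A.cp1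
  have := B.ca; have := B.ca1; have := B.ca2; have := B.cp; have := B.cp1
  simp only [nn_sq]
  refine Eq.trans ?_ ((lin4 d2 (-1) (-2) (-2*K) (fun y => a y ^ 2 + b y ^ 2)
    (fun y => (y * a y)^2 + (y * b y)^2) (fun y => p1 y ^ 2 + q1 y ^ 2)
    (fun y => p y ^ 2 + q y ^ 2) (by fun_prop) (by fun_prop) (by fun_prop)
    (by fun_prop)).trans (by ring))
  rw [← intervalIntegral.integral_const_mul]
  apply int_eq (fun y => 2 * (p y * p1 y + q y * q1 y) - al * D * (a y * b1 y - b y * a1 y)) _ _ _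
    (fun y hy => ((((A.dp y hy).mul (A.dp1 y hy)).add ((B.dp y hy).mul (B.dp1 y hy))).const_mul
      2).sub ((((A.da y hy).mul (B.da1 y hy)).sub ((B.da y hy).mul (A.da1 y hy))).const_mul (al*D)))
  · simp [A.al, A.ar, A.pl, A.pr, B.al, B.ar, B.pl, B.pr]
  · fun_prop
  · fun_prop
  · intro y hy
    rw [h1 y hy, h2 y hy]
    linear_combination (- ((d2 - y^2) * (a y^2 + b y^2) + 2 * p y * a y + 2 * q y * b y)) * hal

lemma e6 (A : Pair K a a1 a2 p p1) (B : Pair K b b1 b2 q q1) :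
    nn a b ^ 2 ≤ 2 * (nn (fun y => y * a y) (fun y => y * b y) * nn a1 b1) := by
  have := A.ca; have := A.ca1; have := B.ca; have := B.ca1
  have h : nn a b ^ 2 = -2 * ∫ y in (-1:ℝ)..1, ((y * a y) * a1 y + (y * b y) * b1 y) := by
    rw [nn_sq, ← intervalIntegral.integral_const_mul]
    apply int_eq (fun y => y * (a y * a y + b y * b y)) _ _ _
      (fun y hy => (hasDerivAt_id' y).mul (((A.da y hy).mul (A.da y hy)).add
        ((B.da y hy).mul (B.da y hy))))
    · simp [A.al, A.ar, A.pl, A.pr, B.al, B.ar, B.pl, B.pr]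
    · fun_prop
    · fun_prop
    · intro y hy
      ring
  have := cs (fun y => y * a y) (fun y => y * b y) a1 b1 (by fun_prop) (by fun_prop) (by fun_prop)
    (by fun_prop)
  have := abs_le.1 this
  linarith
end

lemma int_mono (u v : ℝ → ℝ) (hu : Continuous u) (hv : Continuous v)
    (h : ∀ y ∈ Set.Icc (-1:ℝ) 1, u y ≤ v y) :
    (∫ y in (-1:ℝ)..1, u y) ≤ ∫ y in (-1:ℝ)..1, v y :=
  intervalIntegral.integral_mono_on (by norm_num) (hu.intervalIntegrable _ _)
    (hv.intervalIntegrable _ _) h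

lemma r8_big (d2 K : ℝ) (hK : 1 ≤ K) (a a1 a2 p p1 : ℝ → ℝ) (A : Pair K a a1 a2 p p1) :
    (∫ y in (-1:ℝ)..1, (1/10 * ((y * a y)^2 + p1 y ^ 2 + K * p y ^ 2))) ≤
      ∫ y in (-1:ℝ)..1, ((d2 - y^2) * a y + 2 * p y) * (2 * y * a1 y + 1 * a y) := by
  have := A.ca; have := A.ca1; have := A.ca2; have := A.cp; have := A.cp1
  have hy1 : ∀ y : ℝ, HasDerivAt (fun y : ℝ => y * (d2 - y^2)) (d2 - 3 * y^2) y := fun y => by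
    refine ((hasDerivAt_id' y).mul ((hasDerivAt_pow 2 y).const_sub d2)).congr_deriv ?_
    push_cast; ring
  have hy2 : ∀ y : ℝ, HasDerivAt (fun y : ℝ => y * (1 - y^2)) (1 - 3 * y^2) y := fun y => by
    refine ((hasDerivAt_id' y).mul ((hasDerivAt_pow 2 y).const_sub 1)).congr_deriv ?_
    push_cast; ring
  have hy3 : ∀ y : ℝ, HasDerivAt (fun y : ℝ => y^2) (2*y) y := fun y => by
    simpa using (hasDerivAt_pow 2 y)
  have E := int_eq (fun y => (y * (d2 - y^2)) * (a y * a y) + 4 * (y * (p y * a y)) - 2 * (p y * p1 y)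
      - 1/8 * ((y * (1 - y^2)) * (p1 y * p1 y - K * (p y * p y)) + 5 * (y^2 * (p y * p1 y)
        - y * (p y * p y)) - 5/2 * (y * (p y * p y))))
     _ (fun y => ((d2 - y^2) * a y + 2 * p y) * (2 * y * a1 y + 1 * a y))
     (fun y => 2 * (y * a y - p1 y)^2 + 2 * K * p y ^2 + 1/8 * ((1-3*y^2)*(p1 y^2 - K * p y^2)
       + 2*(y*(1-y^2)) * p1 y * a y + 5 * (y^2 * p y * a y + y^2 * p1 y ^2 + K * y^2 * p y ^2
        - p y^2) - 5 * y * p y * p1 y - 5/2 * p y ^2))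
     (fun y hy => ((((hy1 y).mul ((A.da y hy).mul (A.da y hy))).add (((hasDerivAt_id' y).mul
       ((A.dp y hy).mul (A.da y hy))).const_mul 4)).sub (((A.dp y hy).mul (A.dp1 y hy)).const_mul
       2)).sub (((((hy2 y).mul (((A.dp1 y hy).mul (A.dp1 y hy)).sub (((A.dp y hy).mul
       (A.dp y hy)).const_mul K))).add ((((hy3 y).mul ((A.dp y hy).mul (A.dp1 y hy))).sub
       ((hasDerivAt_id' y).mul ((A.dp y hy).mul (A.dp y hy)))).const_mul 5)).sub
       (((hasDerivAt_id' y).mul ((A.dp y hy).mul (A.dp y hy))).const_mul (5/2))).const_mul (1/8)))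
     (by simp [A.al, A.ar, A.pl, A.pr]) (by fun_prop) (by fun_prop) (by
      intro y hy
      simp only [Pi.mul_apply, Pi.sub_apply]
      ring)
  rw [E]
  apply int_mono _ _ (by fun_prop) (by fun_prop)
  intro y hy
  have hyy : y ^ 2 ≤ 1 := by nlinarith [hy.1, hy.2]
  have hKp : p y ^ 2 ≤ K * p y ^ 2 := by nlinarith [sq_nonneg (p y)]
  obtain ⟨r, hr⟩ : ∃ r, y * a y = r + p1 y := ⟨y * a y - p1 y, by ring⟩
  have e1 : 2*(y*(1-y^2)) * p1 y * a y = 2 * (1-y^2) * p1 y * (r + p1 y) := by rw [← hr]; ring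
  have e2 : y^2 * p y * a y = y * p y * (r + p1 y) := by rw [← hr]; ring
  rw [e1, e2, hr]
  generalize p1 y = P at *
  generalize p y = Q at *
  have hKy : 0 ≤ y ^ 2 * (K * Q ^ 2) := by nlinarith [sq_nonneg Q, sq_nonneg y, mul_nonneg (sq_nonneg y) (sq_nonneg Q)]
  have c1 : -(1/8 * (5 * y * Q * r)) ≤ 1/2 * r^2 + 1/4 * Q^2 := by
    nlinarith [sq_nonneg (r + 5/8 * y * Q), mul_nonneg (sub_nonneg.2 hyy) (sq_nonneg Q), sq_nonneg Q]
  have c2 : -((1-y^2)/4 - 1/5) * P * r ≤ 1/10 * P^2 + 1/10 * r^2 := by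
    nlinarith [sq_nonneg (P + r), sq_nonneg (P - r), mul_nonneg (sub_nonneg.2 hyy) (sq_nonneg (P-r)),
      mul_nonneg (sub_nonneg.2 hyy) (sq_nonneg (P+r)), mul_nonneg (sq_nonneg y) (sq_nonneg (P+r)), mul_nonneg (sq_nonneg y) (sq_nonneg (P-r))]
  nlinarith [sq_nonneg P, sq_nonneg r, sq_nonneg Q]

lemma r8_small (d2 K e s : ℝ) (hd : 0 < d2) (hd' : d2 ≤ 1/21) (hK : 1 ≤ K) (he : e = 3 * d2)
    (hs : s = e / (e + 1)) :
    ∃ β γ : ℝ → ℝ, Continuous β ∧ Continuous γ ∧ (∀ y ∈ Set.Icc (-1:ℝ) 1, β y ^ 2 ≤ 84 * d2) ∧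
      (∀ y ∈ Set.Icc (-1:ℝ) 1, γ y ^ 2 ≤ 4) ∧
      ∀ a a1 a2 p p1 : ℝ → ℝ, Pair K a a1 a2 p p1 →
      (∫ y in (-1:ℝ)..1, (1/10 * ((y * a y)^2 + p1 y ^ 2 + K * p y ^ 2))) ≤
      ∫ y in (-1:ℝ)..1, ((d2 - y^2) * a y + 2 * p y) * (β y * a1 y + γ y * a y) := by
  have he0 : 0 < e := by linarith
  have hs0 : 0 ≤ s := by rw [hs]; positivity
  have hs8 : s ≤ 1/8 := by rw [hs, div_le_iff₀ (by linarith)]; linarith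
  obtain ⟨G, hGd⟩ : ∃ G : ℝ → ℝ, G = fun y => e / (e + y^2) := ⟨_, rfl⟩
  have hpos : ∀ y : ℝ, 0 < e + y^2 := fun y => by positivity
  have hGc : Continuous G := by
    rw [hGd]
    exact continuous_const.div (by fun_prop) fun y => (hpos y).ne'
  have hG1 : ∀ y, e * (1 - G y) = y^2 * G y := fun y => by
    rw [hGd]; have := (hpos y).ne'; field_simp; ring
  have hG0 : ∀ y, 0 ≤ G y := fun y => by rw [hGd]; have := hpos y; positivity
  have hGle : ∀ y, G y ≤ 1 := fun y => by
    have := hG1 y; have := hG0 y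
    by_contra h
    push Not at h
    nlinarith [mul_nonneg (sq_nonneg y) (hG0 y)]
  have hGs : ∀ y ∈ Set.Icc (-1:ℝ) 1, s ≤ G y := fun y hy => by
    rw [hGd, hs]
    apply div_le_div_of_nonneg_left he0.le (hpos y)
    nlinarith [hy.1, hy.2]
  have hGd' : ∀ y, HasDerivAt G (-(2 * y * G y ^2 / e)) y := fun y => by
    have h1 : HasDerivAt (fun y : ℝ => e + y^2) (2*y) y := by
      simpa using (hasDerivAt_pow 2 y).const_add e
    have h2 := (h1.inv (hpos y).ne').const_mul e
    rw [hGd]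
    refine (h2.congr_deriv ?_)
    have := (hpos y).ne'
    field_simp
  have hbd : ∀ y, HasDerivAt (fun y => 2 * (y * (G y - s))) (4 * G y^2 - 2 * G y - 2 * s) y := fun y => by
    have h2 := (((hasDerivAt_id' y).mul ((hGd' y).sub_const s))).const_mul 2
    refine h2.congr_deriv ?_
    have h3 : y * (2 * y * G y ^ 2 / e) = 2 * (1 - G y) * G y := by
      have := hG1 y
      field_simp
      linear_combination (-G y) * this
    linear_combination (-2) * h3
  have hb1 : 2 * (1 * (G 1 - s)) = 0 := by rw [hs, hGd]; simp
  have hb2 : 2 * ((-1) * (G (-1) - s)) = 0 := by rw [hs, hGd]; simp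
  refine ⟨fun y => 2 * (y * (G y - s)), fun y => 4 * G y^2 - 2 * G y - 2 * s - (1 - s),
    by fun_prop, by fun_prop, ?_, ?_, ?_⟩
  · intro y hy
    have h1 : (G y - s)^2 ≤ G y ^2 := by
      have := hGs y hy
      nlinarith
    have h2 : y^2 * G y^2 = e * (1 - G y) * G y := by rw [hG1]; ring
    have h3 : y^2 * (G y - s)^2 ≤ e * (1 - G y) * G y := by
      rw [← h2]; exact mul_le_mul_of_nonneg_left h1 (sq_nonneg y)
    have h4 : e * (1 - G y) * G y ≤ e * 1 := by
      rw [mul_assoc]; apply mul_le_mul_of_nonneg_left _ he0.le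
      nlinarith [hG0 y, hGle y]
    show (2 * (y * (G y - s)))^2 ≤ _
    nlinarith
  · intro y hy
    show (4 * G y^2 - 2 * G y - 2 * s - (1 - s))^2 ≤ 4
    have := hG0 y; have := hGle y
    have h1 : (4 * G y^2 - 2 * G y - 2 * s - (1 - s)) ≤ 2 := by nlinarith
    have h2 : -2 ≤ (4 * G y^2 - 2 * G y - 2 * s - (1 - s)) := by nlinarith [sq_nonneg (4 * G y - 1)]
    nlinarith
  intro a a1 a2 p p1 A
  have := A.ca; have := A.ca1; have := A.ca2; have := A.cp; have := A.cp1
  have hy2 : ∀ y : ℝ, HasDerivAt (fun y : ℝ => d2 - y^2) (-(2*y)) y := fun y => by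
    simpa using (hasDerivAt_pow 2 y).const_sub d2
  have E := int_eq (fun y => 1/2 * ((d2 - y^2) * ((2 * (y * (G y - s))) * (a y * a y))) +
        2 * ((2 * (y * (G y - s))) * (p y * a y)) - 7/8 * ((2 * (y * (G y - s))) *
          (p1 y * p1 y - K * (p y * p y))) - 2 * (1 - s) * (p y * p1 y))
     _ (fun y => ((d2 - y^2) * a y + 2 * p y) * ((2 * (y * (G y - s))) * a1 y +
       (4 * G y^2 - 2 * G y - 2 * s - (1 - s)) * a y))
     (fun y => (y * (2 * (y * (G y - s))) + (1/2 * (4 * G y^2 - 2 * G y - 2 * s) - (1 - s)) * (d2 - y^2))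
         * a y ^2 + (2 * (1 - s) + 7/8 * (4 * G y^2 - 2 * G y - 2 * s)) * p1 y ^2
         + (2 * (1 - s) - 7/8 * (4 * G y^2 - 2 * G y - 2 * s)) * (K * p y ^2)
         - 1/4 * (2 * (y * (G y - s))) * p1 y * a y)
     (fun y hy => (((((hy2 y).mul ((hbd y).mul ((A.da y hy).mul (A.da y hy)))).const_mul (1/2)).add
       (((hbd y).mul ((A.dp y hy).mul (A.da y hy))).const_mul 2)).sub
       (((hbd y).mul (((A.dp1 y hy).mul (A.dp1 y hy)).sub (((A.dp y hy).mul
       (A.dp y hy)).const_mul K))).const_mul (7/8))).sub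
       (((A.dp y hy).mul (A.dp1 y hy)).const_mul (2 * (1 - s))))
     (by simp only [A.al, A.ar, A.pl, A.pr, hb1, hb2]; ring) (by fun_prop) (by fun_prop) (by
      intro y hy
      simp only [Pi.mul_apply, Pi.sub_apply]
      ring)
  rw [E]
  apply int_mono _ _ (by fun_prop) (by fun_prop)
  intro y hy
  have g0 := hG0 y; have g1 := hGle y; have gs := hGs y hy; have ge := hG1 y
  have hW : y * (2 * (y * (G y - s))) + (1/2 * (4 * G y^2 - 2 * G y - 2 * s) - (1 - s)) * (d2 - y^2)
      = y^2 * (1 + 8/3 * (G y * (1 - G y)) - 2 * s) := by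
    rw [show d2 = e/3 by linarith]
    linear_combination (-(2 * G y + 1)/3) * ge
  rw [hW]
  have hg : 0 ≤ G y * (1 - G y) := mul_nonneg g0 (by linarith)
  generalize G y = g at *
  have hKp : 0 ≤ K * p y ^2 := by nlinarith [sq_nonneg (p y)]
  have t1 : 3/4 * (y * a y)^2 ≤ y^2 * (1 + 8/3 * (g * (1 - g)) - 2 * s) * a y^2 := by
    have : y^2 * (1 + 8/3 * (g * (1 - g)) - 2 * s) * a y^2 = (1 + 8/3 * (g * (1 - g)) - 2 * s) * (y * a y)^2 := by ring
    rw [this]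
    apply mul_le_mul_of_nonneg_right _ (sq_nonneg _)
    linarith
  have t2 : 1 * p1 y^2 ≤ (2 * (1 - s) + 7/8 * (4 * g^2 - 2 * g - 2 * s)) * p1 y ^2 := by
    apply mul_le_mul_of_nonneg_right _ (sq_nonneg _)
    nlinarith [sq_nonneg (4 * g - 1)]
  have t3 : 1/5 * (K * p y^2) ≤ (2 * (1 - s) - 7/8 * (4 * g^2 - 2 * g - 2 * s)) * (K * p y ^2) := by
    apply mul_le_mul_of_nonneg_right _ hKp
    nlinarith
  have t4 : 1/4 * (2 * (y * (g - s))) * p1 y * a y ≤ 1/4 * ((y * a y)^2 + p1 y^2) := by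
    have : 1/4 * (2 * (y * (g - s))) * p1 y * a y = 1/2 * (g - s) * (p1 y * (y * a y)) := by ring
    rw [this]
    generalize y * a y = r
    nlinarith [mul_nonneg (sub_nonneg.2 gs) (sq_nonneg (p1 y - r)), mul_nonneg (by linarith : (0:ℝ) ≤ 1 - (g - s)) (add_nonneg (sq_nonneg (p1 y)) (sq_nonneg r))]
  nlinarith [sq_nonneg (y * a y), sq_nonneg (p1 y)]

lemma r8 (d2 K : ℝ) (hd : 0 < d2) (hK : 1 ≤ K) :
    ∃ β γ : ℝ → ℝ, Continuous β ∧ Continuous γ ∧ (∀ y ∈ Set.Icc (-1:ℝ) 1, β y ^ 2 ≤ 84 * d2) ∧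
      (∀ y ∈ Set.Icc (-1:ℝ) 1, γ y ^ 2 ≤ 4) ∧
      ∀ a a1 a2 p p1 : ℝ → ℝ, Pair K a a1 a2 p p1 →
      (∫ y in (-1:ℝ)..1, (1/10 * ((y * a y)^2 + p1 y ^ 2 + K * p y ^ 2))) ≤
      ∫ y in (-1:ℝ)..1, ((d2 - y^2) * a y + 2 * p y) * (β y * a1 y + γ y * a y) := by
  by_cases h : d2 ≤ 1/21
  · exact r8_small d2 K _ _ hd h hK rfl rfl
  · refine ⟨fun y => 2 * y, fun _ => 1, by fun_prop, by fun_prop, ?_, ?_, ?_⟩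
    · intro y hy
      show (2 * y)^2 ≤ _
      nlinarith [hy.1, hy.2]
    · intro y hy; norm_num
    · exact r8_big d2 K hK

set_option maxHeartbeats 1000000 in
lemma alg_core (n V u2 x H Z f g2 ε : ℝ) (hn : 0 < n) (hV0 : 0 ≤ V) (hx : 0 ≤ x)
    (hH : 0 ≤ H) (hZ : 0 ≤ Z) (hε0 : 0 ≤ ε) (hε : ε ≤ 1/2 * (1/10^4)^4)
    (hf0 : 0 ≤ f) (hf : f ≤ 1/2 * (1/10^4)^4 * n) (hV : V^2 ≤ u2)
    (h1 : u2 ≤ f * n + ε * n^2)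
    (h2 : Z^2 ≤ 2 * (x * V) + f * Z + ε * u2)
    (h3 : |g2 * n^2 - x^2 - 2 * H| ≤ f * n)
    (h6 : n^2 ≤ 2 * (x * V))
    (h5 : ∀ g, 0 < g → g^2 = g2 → (x^2 + H) / 10 ≤ (f + Z + ε * n) * (20 * g * V + 4 * n)) :
    False := by
  obtain ⟨θ, hθ⟩ : ∃ θ : ℝ, θ = 1/10^4 := ⟨_, rfl⟩
  rw [← hθ] at hε hf
  have hθ0 : 0 < θ := by rw [hθ]; positivity
  have hfn : f * n ≤ 1/2 * θ^4 * n^2 := by nlinarith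
  have hen : ε * n^2 ≤ 1/2 * θ^4 * n^2 := by nlinarith [sq_nonneg n]
  have hu : u2 ≤ θ^4 * n^2 := by linarith
  have hVn : V ≤ θ^2 * n := by
    apply le_of_sq_le_sq _ (by positivity)
    nlinarith
  have hxV : x * V ≤ x * (θ^2 * n) := mul_le_mul_of_nonneg_left hVn hx
  have h6' : n ≤ 2 * θ^2 * x := by
    have : n * n ≤ (2 * θ^2 * x) * n := by nlinarith
    exact le_of_mul_le_mul_right this hn
  have h3' := abs_le.1 h3
  by_cases hg : g2 ≤ 1
  · have hx2 : x^2 ≤ 2 * n^2 := by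
      have : g2 * n^2 ≤ 1 * n^2 := mul_le_mul_of_nonneg_right hg (sq_nonneg n)
      have h8 : 1/2 * θ^4 * n^2 ≤ 1 * n^2 := mul_le_mul_of_nonneg_right (by rw [hθ]; norm_num) (sq_nonneg n)
      linarith
    have : x ≤ 2 * n := by
      apply le_of_sq_le_sq _ (by positivity)
      nlinarith
    have h9 : n ≤ 2 * θ^2 * (2 * n) := h6'.trans (mul_le_mul_of_nonneg_left this (by positivity))
    rw [hθ] at h9
    linarith
  · push Not at hg
    have hg0 : 0 ≤ g2 := by linarith
    obtain ⟨g, hgd⟩ : ∃ g, g = √g2 := ⟨_, rfl⟩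
    have hg2 : g^2 = g2 := by rw [hgd]; exact Real.sq_sqrt hg0
    have hg1 : 1 ≤ g := by rw [hgd]; exact Real.one_le_sqrt.2 hg.le
    have h5' := h5 g (by linarith) hg2
    obtain ⟨m, hm⟩ : ∃ m, m = g * n := ⟨_, rfl⟩
    have hmn : n ≤ m := by rw [hm]; nlinarith
    have hm0 : 0 < m := by linarith
    have hm2 : g2 * n^2 = m^2 := by rw [hm, ← hg2]; ring
    rw [hm2] at h3'
    have hnm : n^2 ≤ m^2 := by nlinarith
    have hT : 20 * g * V + 4 * n ≤ 24 * m := by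
      have : g * V ≤ g * n := mul_le_mul_of_nonneg_left (by
        have : θ^2 * n ≤ 1 * n := mul_le_mul_of_nonneg_right (by rw [hθ]; norm_num) hn.le
        linarith) (by linarith)
      rw [hm] at *
      linarith
    have hS : f + Z + ε * n ≤ θ^4 * m + Z := by
      have : ε * n ≤ 1/2 * θ^4 * n := mul_le_mul_of_nonneg_right hε hn.le
      have : θ^4 * n ≤ θ^4 * m := mul_le_mul_of_nonneg_left hmn (by positivity)
      linarith
    have h7 : (x^2 + H) / 10 ≤ (θ^4 * m + Z) * (24 * m) :=
      h5'.trans (mul_le_mul hS hT (by positivity) (by positivity))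
    have hZ2 : Z^2 ≤ 4 * θ^2 * x * m + 3 * θ^8 * m^2 := by
      have a1 : f * Z ≤ 1/2 * f^2 + 1/2 * Z^2 := by nlinarith [sq_nonneg (f - Z)]
      have a2 : f^2 ≤ (1/2 * θ^4 * n)^2 := pow_le_pow_left₀ hf0 hf 2
      have a3 : ε * u2 ≤ (1/2 * θ^4) * (θ^4 * n^2) := mul_le_mul hε hu ((sq_nonneg V).trans hV) (by positivity)
      have a4 : x * (θ^2 * n) ≤ x * (θ^2 * m) := by gcongr
      have a5 : θ^8 * n^2 ≤ θ^8 * m^2 := mul_le_mul_of_nonneg_left hnm (by positivity)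
      have a6 : (1/2 * θ^4 * n)^2 = 1/4 * (θ^8 * n^2) := by ring
      have a7 : (1/2 * θ^4) * (θ^4 * n^2) = 1/2 * (θ^8 * n^2) := by ring
      have a8 : 0 ≤ θ^8 * m^2 := by positivity
      have a9 : 4 * θ^2 * x * m = 4 * (x * (θ^2 * m)) := by ring
      have a10 : 3 * θ^8 * m^2 = 3 * (θ^8 * m^2) := by ring
      rw [a9, a10]
      linarith
    have hmZ : 2 * θ * (m * Z) ≤ θ^2 * m^2 + Z^2 := by nlinarith [sq_nonneg (θ * m - Z)]
    have hxm : 2 * x * m ≤ x^2 + m^2 := by nlinarith [sq_nonneg (x - m)]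
    have hx2 : 0 ≤ x^2 := sq_nonneg x
    have hmp : 0 < m^2 := by positivity
    have h7' : (x^2 + H) / 10 ≤ 24 * θ^4 * m^2 + 24 * (m * Z) := h7.trans (le_of_eq (by ring))
    have hZ2' : Z^2 ≤ 4 * θ^2 * (x * m) + 3 * θ^8 * m^2 := hZ2.trans (le_of_eq (by ring))
    have hxm' : 2 * (x * m) ≤ x^2 + m^2 := by linarith
    have hnm' := mul_le_mul_of_nonneg_left hnm (by positivity : 0 ≤ 1/2 * θ^4)
    clear hZ2 h7 hm2 hxm h5 h5' h6 h1 h2 hV hxV h6' hS hT hen hε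
    generalize m * Z = mZ at *
    generalize x * m = xm at *
    generalize f * n = fn at *
    generalize m^2 = m2 at *
    generalize x^2 = x2 at *
    generalize n^2 = n2 at *
    generalize Z^2 = Z2 at *
    norm_num [hθ] at h7' hZ2' hmZ hfn hnm'
    linarith

lemma sq_lin (β γ d2 : ℝ) (g1 : β^2 ≤ 84 * d2) (g2 : γ^2 ≤ 4) (c z : ℝ) :
    (β * c + γ * z)^2 ≤ 168 * d2 * c^2 + 8 * z^2 := by
  nlinarith [sq_nonneg (β * c - γ * z), mul_le_mul_of_nonneg_right g1 (sq_nonneg c),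
    mul_le_mul_of_nonneg_right g2 (sq_nonneg z)]

set_option maxHeartbeats 2000000 in
lemma resolv {K : ℝ} {a a1 a2 p p1 b b1 b2 q q1 : ℝ → ℝ}
    (A : Pair K a a1 a2 p p1) (B : Pair K b b1 b2 q q1) (fr fi : ℝ → ℝ) (hfr : Continuous fr)
    (hfi : Continuous fi) (al d2 s ε : ℝ) (hal : al ^ 2 = 1) (hK : 1 ≤ K) (hs : 0 < s)
    (hε0 : 0 ≤ ε) (hε : ε ≤ 1/2 * (1/10^4)^4)
    (h1 : ∀ y ∈ Set.Icc (-1:ℝ) 1, fr y = -al * ((d2 - y^2) * b y + 2 * q y)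
      - s^2 * (a2 y - K * a y) - (ε * s) * a y)
    (h2 : ∀ y ∈ Set.Icc (-1:ℝ) 1, fi y = al * ((d2 - y^2) * a y + 2 * p y)
      - s^2 * (b2 y - K * b y) - (ε * s) * b y) :
    (1/2 * (1/10^4)^4) * s * nn a b ≤ nn fr fi := by
  have ca := A.ca; have ca1 := A.ca1; have ca2 := A.ca2; have cp := A.cp; have cp1 := A.cp1
  have cb := B.ca; have cb1 := B.ca1; have cb2 := B.ca2; have cq := B.cp; have cq1 := B.cp1
  by_contra hcon
  push Not at hcon
  have E1 := e1 A B fr fi hfr hfi al d2 _ _ h1 h2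
  have E2 := e2 A B fr fi hfr hfi al d2 _ _ h1 h2
  have E3 := e3 A B fr fi hfr hfi al d2 _ _ hal h1 h2
  have E6 := e6 A B
  have habs : |al| = 1 := by rw [← sq_eq_sq₀ (abs_nonneg _) zero_le_one, sq_abs, hal]; norm_num
  have C1 := cs fr fi a b hfr hfi ca cb
  have C2 := cs fr fi (fun y => a2 y - K * a y) (fun y => b2 y - K * b y) hfr hfi (by fun_prop)
    (by fun_prop)
  have C2' := cs (fun y => y * a y) (fun y => y * b y) b1 (fun y => - a1 y) (by fun_prop)
    (by fun_prop) cb1 (by fun_prop)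
  have hsw : nn b1 (fun y => - a1 y) = nn a1 b1 := by
    unfold nn; congr 1; congr 1; ext y; ring
  have C3 := cs fi fr a (fun y => - b y) hfi hfr ca (by fun_prop)
  have hsw3 : nn a (fun y => - b y) = nn a b := by
    unfold nn; congr 1; congr 1; ext y; ring
  have hsw3' : nn fi fr = nn fr fi := by
    unfold nn; congr 1; congr 1; ext y; ring
  have hal' : ∀ t : ℝ, |al * t| = |t| := fun t => by rw [abs_mul, habs, one_mul]
  have E5 : 0 < d2 → (nn (fun y => y * a y) (fun y => y * b y) ^2 + (nn p1 q1 ^2 + K * nn p q^2))/10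
      ≤ (nn fr fi + s^2 * nn (fun y => a2 y - K * a y) (fun y => b2 y - K * b y)
        + ε * s * nn a b) * (20 * √d2 * nn a1 b1 + 4 * nn a b) := by
    intro hd
    obtain ⟨β, γ, hβ, hγ, hβ2, hγ2, hR⟩ := r8 d2 K hd hK
    have R1 := hR a a1 a2 p p1 A
    have R2 := hR b b1 b2 q q1 B
    set Ta : ℝ → ℝ := fun y => β y * a1 y + γ y * a y with hTa
    set Tb : ℝ → ℝ := fun y => β y * b1 y + γ y * b y with hTb
    have cTa : Continuous Ta := by fun_prop
    have cTb : Continuous Tb := by fun_prop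
    have hsum : (nn (fun y => y * a y) (fun y => y * b y) ^2 + (nn p1 q1 ^2 + K * nn p q^2))/10 ≤
        (∫ y in (-1:ℝ)..1, ((d2 - y^2) * a y + 2 * p y) * Ta y) +
        (∫ y in (-1:ℝ)..1, ((d2 - y^2) * b y + 2 * q y) * Tb y) := by
      refine le_trans (le_of_eq ?_) (add_le_add R1 R2)
      rw [← intervalIntegral.integral_add (by apply Continuous.intervalIntegrable; fun_prop)
        (by apply Continuous.intervalIntegrable; fun_prop)]
      simp only [nn_sq]
      refine Eq.trans ?_ ((lin4 (1/10) (1/10) (K/10) 0 (fun y => (y * a y)^2 + (y * b y)^2)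
        (fun y => p1 y^2 + q1 y^2) (fun y => p y ^2 + q y^2) (fun _ => 0) (by fun_prop)
        (by fun_prop) (by fun_prop) (by fun_prop)).symm.trans ?_)
      · ring
      · congr 1; ext y; ring
    have hexp : (∫ y in (-1:ℝ)..1, ((d2 - y^2) * a y + 2 * p y) * Ta y) +
        (∫ y in (-1:ℝ)..1, ((d2 - y^2) * b y + 2 * q y) * Tb y) =
        al * (∫ y in (-1:ℝ)..1, fi y * Ta y + fr y * (- Tb y)) +
        (al * s^2) * (∫ y in (-1:ℝ)..1, (b2 y - K * b y) * Ta y + (a2 y - K * a y) * (- Tb y)) +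
        (al * (ε * s)) * (∫ y in (-1:ℝ)..1, b y * Ta y + a y * (- Tb y)) := by
      rw [← intervalIntegral.integral_add (by apply Continuous.intervalIntegrable; fun_prop)
        (by apply Continuous.intervalIntegrable; fun_prop)]
      refine Eq.trans ?_ ((lin4 al (al * s^2) (al * (ε * s)) 0
        (fun y => fi y * Ta y + fr y * (- Tb y))
        (fun y => (b2 y - K * b y) * Ta y + (a2 y - K * a y) * (- Tb y))
        (fun y => b y * Ta y + a y * (- Tb y)) (fun _ => 0) (by fun_prop)
        (by fun_prop) (by fun_prop) (by fun_prop)).trans (by ring))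
      apply intervalIntegral.integral_congr
      intro y hy
      rw [Set.uIcc_of_le (by norm_num)] at hy
      simp only
      rw [h1 y hy, h2 y hy]
      linear_combination (-((d2 - y^2) * a y + 2 * p y) * Ta y -
        ((d2 - y^2) * b y + 2 * q y) * Tb y) * hal
    have hswT : nn Ta (fun y => - Tb y) = nn Ta Tb := by
      unfold nn; congr 1; congr 1; ext y; ring
    have D1 := cs fi fr Ta (fun y => - Tb y) hfi hfr cTa (by fun_prop)
    have D2 := cs (fun y => b2 y - K * b y) (fun y => a2 y - K * a y) Ta (fun y => - Tb y)
      (by fun_prop) (by fun_prop) cTa (by fun_prop)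
    have D3 := cs b a Ta (fun y => - Tb y) cb ca cTa (by fun_prop)
    have hsD : nn (fun y => b2 y - K * b y) (fun y => a2 y - K * a y) =
      nn (fun y => a2 y - K * a y) (fun y => b2 y - K * b y) := by
      unfold nn; congr 1; congr 1; ext y; ring
    have hsba : nn b a = nn a b := by
      unfold nn; congr 1; congr 1; ext y; ring
    rw [hswT, hsw3'] at D1
    rw [hswT, hsD] at D2
    rw [hswT, hsba] at D3
    rw [← hal'] at D1 D2 D3
    have D1 := (abs_le.1 D1).2
    have D2 := mul_le_mul_of_nonneg_left (abs_le.1 D2).2 (sq_nonneg s)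
    have D3 := mul_le_mul_of_nonneg_left (abs_le.1 D3).2 (mul_nonneg hε0 hs.le)
    have hT : nn Ta Tb ≤ 20 * √d2 * nn a1 b1 + 4 * nn a b := by
      have n1 := nn_nonneg a1 b1
      have n2 := nn_nonneg a b
      have n3 := Real.sqrt_nonneg d2
      apply le_of_sq_le_sq _ (by positivity)
      have : nn Ta Tb ^2 ≤ 168 * d2 * nn a1 b1^2 + 8 * nn a b^2 := by
        simp only [nn_sq]
        refine le_trans (int_mono _ (fun y => (168 * d2) * (a1 y ^2 + b1 y^2) + 8 * (a y^2 + b y^2)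
          + 0 * (0:ℝ) + 0 * (0:ℝ)) (by fun_prop) (by fun_prop) ?_) (le_of_eq ?_)
        · intro y hy
          have g1 := hβ2 y hy
          have g2 := hγ2 y hy
          have := sq_lin _ _ _ g1 g2
          have t1 := this (a1 y) (a y)
          have t2 := this (b1 y) (b y)
          simp only [hTa, hTb]
          linarith
        · refine (lin4 _ _ _ _ _ _ (fun _ => 0) (fun _ => 0) (by fun_prop) (by fun_prop)
            (by fun_prop) (by fun_prop)).trans ?_
          ring
      have hd2 : √d2 ^2 = d2 := Real.sq_sqrt hd.le
      have : (20 * √d2 * nn a1 b1 + 4 * nn a b)^2 = 400 * d2 * nn a1 b1^2 + 16 * nn a b^2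
        + 160 * (√d2 * nn a1 b1 * nn a b) := by
        rw [← hd2]; simp only [Real.sqrt_sq n3]; ring
      have q1 : 0 ≤ √d2 * nn a1 b1 * nn a b := by positivity
      have q2 : 0 ≤ d2 * nn a1 b1^2 := by positivity
      have q3 : 0 ≤ nn a b^2 := by positivity
      linarith
    have n1 := nn_nonneg fr fi
    have n2 := nn_nonneg a b
    have n3 := nn_nonneg (fun y => a2 y - K * a y) (fun y => b2 y - K * b y)
    calc _ ≤ _ := hsum
      _ = _ := hexp
      _ ≤ (nn fr fi + s^2 * nn (fun y => a2 y - K * a y) (fun y => b2 y - K * b y)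
        + ε * s * nn a b) * nn Ta Tb := by linarith
      _ ≤ _ := mul_le_mul_of_nonneg_left hT (by positivity)
  rw [E1] at C1
  rw [E2] at C2
  rw [hsw] at C2'
  rw [← hal'] at C3 C2'
  rw [E3, hsw3, hsw3'] at C3
  have n1 := nn_nonneg fr fi
  have n2 := nn_nonneg a b
  have n3 := nn_nonneg (fun y => a2 y - K * a y) (fun y => b2 y - K * b y)
  have n4 := nn_nonneg a1 b1
  have n5 := nn_nonneg p1 q1
  have n6 := nn_nonneg p q
  have n7 := nn_nonneg (fun y => y * a y) (fun y => y * b y)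
  generalize nn fr fi = f at *
  generalize nn a b = n at *
  generalize nn (fun y => a2 y - K * a y) (fun y => b2 y - K * b y) = DD at *
  generalize nn a1 b1 = v at *
  generalize nn p1 q1 = h1' at *
  generalize nn p q = h0' at *
  generalize nn (fun y => y * a y) (fun y => y * b y) = X at *
  obtain ⟨δ, hδ0, rfl⟩ : ∃ δ : ℝ, 0 < δ ∧ s = δ^2 := ⟨√s, Real.sqrt_pos.2 hs, (Real.sq_sqrt hs.le).symm⟩
  have hn : 0 < n := by
    rcases n2.lt_or_eq with h | h
    · exact h
    · rw [← h] at hcon; linarith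
  have hδ2 : 0 < δ^2 := by positivity
  have C1 := (abs_le.1 C1).2
  have C2 := (abs_le.1 C2).1
  have C2' := (abs_le.1 C2').2
  refine alg_core n (δ * v) (δ^2 * (v^2 + K * n^2)) (X / δ) ((h1'^2 + K * h0'^2)/δ^2) (δ^2 * DD)
    (f/δ^2) (d2/δ^2) ε hn (by positivity) (by positivity) (by positivity) (by positivity)
    hε0 hε (by positivity) ?_ ?_ ?_ ?_ ?_ ?_ ?_
  · rw [div_le_iff₀ hδ2]; linarith
  · have : 0 ≤ δ^2 * (K * n^2) := by positivity
    nlinarith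
  · have : f / δ^2 * n + ε * n^2 = (f * n + ε * δ^2 * n^2)/δ^2 := by field_simp
    rw [this, le_div_iff₀ hδ2]
    linarith
  · have e1 : X / δ * (δ * v) = X * v := by field_simp
    have e2 : f / δ^2 * (δ^2 * DD) = f * DD := by field_simp
    rw [e1, e2]
    linarith
  · have e : d2 / δ^2 * n^2 - (X/δ)^2 - 2 * ((h1'^2 + K * h0'^2)/δ^2) =
      (d2 * n^2 - X^2 - 2 * (h1'^2 + K * h0'^2)) / δ^2 := by field_simp
    rw [e, abs_div, abs_of_pos hδ2, div_mul_eq_mul_div]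
    exact div_le_div_of_nonneg_right C3 hδ2.le
  · have e1 : X / δ * (δ * v) = X * v := by field_simp
    rw [e1]; exact E6
  · intro g hg0 hg
    have hd : d2 = (δ * g)^2 := by rw [mul_pow, hg]; field_simp
    have h := E5 (by rw [hd]; positivity)
    rw [hd, Real.sqrt_sq (by positivity)] at h
    have e1 : ((X/δ)^2 + (h1'^2 + K * h0'^2)/δ^2)/10 = ((X^2 + (h1'^2 + K * h0'^2))/10)/δ^2 := by
      field_simp
    have e2 : (f/δ^2 + δ^2 * DD + ε * n) * (20 * g * (δ * v) + 4 * n) =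
      ((f + (δ^2)^2 * DD + ε * δ^2 * n) * (20 * (δ * g) * v + 4 * n))/δ^2 := by field_simp
    rw [e1, e2]
    exact div_le_div_of_nonneg_right h hδ2.le

lemma nn_smul (c : ℝ) (hc : 0 ≤ c) (u v : ℝ → ℝ) :
    nn (fun y => c * u y) (fun y => c * v y) = c * nn u v := by
  unfold nn
  rw [← Real.sqrt_sq hc, ← Real.sqrt_mul (by positivity), Real.sqrt_sq hc,
    ← intervalIntegral.integral_const_mul]
  congr 2
  ext y; ring

lemma nn_zero {u v : ℝ → ℝ} (hu : Continuous u) (hv : Continuous v) (h : nn u v = 0) :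
    ∀ y ∈ Set.Icc (-1:ℝ) 1, u y = 0 ∧ v y = 0 := by
  intro y hy
  by_contra hne
  have hpos : 0 < u y ^2 + v y^2 := by
    by_contra h'
    exact hne ⟨by nlinarith [sq_nonneg (u y), sq_nonneg (v y)],
      by nlinarith [sq_nonneg (u y), sq_nonneg (v y)]⟩
  have := intervalIntegral.integral_pos (f := fun y => u y^2 + v y^2) (by norm_num : (-1:ℝ) < 1)
    (by fun_prop) (fun y _ => by positivity) ⟨y, hy, hpos⟩
  rw [← nn_sq, h] at this
  norm_num at this

lemma p1_scaled {K : ℝ} {a a1 a2 p p1 b b1 b2 q q1 : ℝ → ℝ}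
    (A : Pair K a a1 a2 p p1) (B : Pair K b b1 b2 q q1) (fr fi : ℝ → ℝ) (hfr : Continuous fr)
    (hfi : Continuous fi) (κ d2 ν ε : ℝ) (hκ : κ ≠ 0) (hK : 1 ≤ K) (hν : 0 < ν)
    (hε0 : 0 ≤ ε) (hε : ε ≤ 1/2 * (1/10^4)^4)
    (h1 : ∀ y ∈ Set.Icc (-1:ℝ) 1, fr y = -κ * ((d2 - y^2) * b y + 2 * q y)
      - ν * (a2 y - K * a y) - (ε * √(ν * |κ|)) * a y)
    (h2 : ∀ y ∈ Set.Icc (-1:ℝ) 1, fi y = κ * ((d2 - y^2) * a y + 2 * p y)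
      - ν * (b2 y - K * b y) - (ε * √(ν * |κ|)) * b y) :
    (1/2 * (1/10^4)^4) * √(ν * |κ|) * nn a b ≤ nn fr fi ∧
    (nn fr fi = 0 → nn p1 q1 = 0) := by
  have hk : 0 < |κ| := abs_pos.2 hκ
  have hs : √(ν * |κ|) = |κ| * √(ν / |κ|) := by
    rw [← Real.sqrt_sq hk.le, ← Real.sqrt_mul (by positivity), Real.sqrt_sq hk.le]
    congr 1; field_simp
  have hs2 : √(ν / |κ|)^2 = ν / |κ| := Real.sq_sqrt (by positivity)
  have hal : (κ / |κ|)^2 = 1 := by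
    rw [div_pow, sq_abs]; exact div_self (pow_ne_zero 2 hκ)
  have g1 : ∀ y ∈ Set.Icc (-1:ℝ) 1, |κ|⁻¹ * fr y = -(κ/|κ|) * ((d2 - y^2) * b y + 2 * q y)
      - √(ν / |κ|)^2 * (a2 y - K * a y) - (ε * √(ν / |κ|)) * a y := fun y hy => by
    rw [h1 y hy, hs2, hs]; field_simp
  have g2 : ∀ y ∈ Set.Icc (-1:ℝ) 1, |κ|⁻¹ * fi y = (κ/|κ|) * ((d2 - y^2) * a y + 2 * p y)
      - √(ν / |κ|)^2 * (b2 y - K * b y) - (ε * √(ν / |κ|)) * b y := fun y hy => by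
    rw [h2 y hy, hs2, hs]; field_simp
  have cfr : Continuous (fun y => |κ|⁻¹ * fr y) := by fun_prop
  have cfi : Continuous (fun y => |κ|⁻¹ * fi y) := by fun_prop
  have hpos : 0 < √(ν / |κ|) := Real.sqrt_pos.2 (by positivity)
  have P := resolv A B _ _ cfr cfi _ d2 _ ε hal hK hpos hε0 hε g1 g2
  rw [nn_smul _ (by positivity)] at P
  have P' : (1/2 * (1/10^4)^4) * √(ν * |κ|) * nn a b ≤ nn fr fi := by
    have := mul_le_mul_of_nonneg_left P hk.le
    rw [mul_inv_cancel_left₀ hk.ne'] at this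
    rw [hs]; linarith
  refine ⟨P', fun h0 => ?_⟩
  have E3 := e3 A B _ _ cfr cfi _ d2 _ _ hal g1 g2
  have hn : nn a b = 0 := by
    rw [h0] at P'
    have hp : 0 < (1/2 * (1/10^4)^4) * √(ν * |κ|) := by positivity
    have := nn_nonneg a b
    by_contra hne
    have : 0 < nn a b := lt_of_le_of_ne this (Ne.symm hne)
    nlinarith [mul_pos hp this]
  have hz := nn_zero hfr hfi h0
  have hI : (∫ y in (-1:ℝ)..1, (|κ|⁻¹ * fi y * a y + |κ|⁻¹ * fr y * (- b y))) = 0 := by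
    rw [intervalIntegral.integral_congr (g := fun _ => (0:ℝ))]
    · simp
    · intro y hy
      rw [Set.uIcc_of_le (by norm_num)] at hy
      simp [hz y hy]
  rw [hI, hn] at E3
  have := nn_nonneg p1 q1
  have h5 : 0 ≤ K * nn p q ^2 := by positivity
  have h6 := sq_nonneg (nn (fun y => y * a y) (fun y => y * b y))
  have : nn p1 q1 ^2 = 0 := by nlinarith [sq_nonneg (nn p1 q1)]
  exact pow_eq_zero_iff (by norm_num) |>.1 this

/-- complex solution, only left boundary conditions -/
structure CS (K ν κ d2 μ : ℝ) (h : ℝ → ℂ) (w w1 w2 φ φ1 : ℝ → ℂ) : Prop where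
  cw : Continuous w
  cw1 : Continuous w1
  cw2 : Continuous w2
  cφ : Continuous φ
  cφ1 : Continuous φ1
  dw : ∀ y ∈ Set.Icc (-1:ℝ) 1, HasDerivAt w (w1 y) y
  dw1 : ∀ y ∈ Set.Icc (-1:ℝ) 1, HasDerivAt w1 (w2 y) y
  dφ : ∀ y ∈ Set.Icc (-1:ℝ) 1, HasDerivAt φ (φ1 y) y
  dφ1 : ∀ y ∈ Set.Icc (-1:ℝ) 1, HasDerivAt φ1 (w y + K * φ y) y
  wl : w (-1) = 0
  φl : φ (-1) = 0
  eq : ∀ y ∈ Set.Icc (-1:ℝ) 1, -(ν:ℂ) * (w2 y - K * w y) + Complex.I * κ * (((d2:ℂ) - (y:ℂ)^2) * w y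
    + 2 * φ y) - μ * w y = h y
  cd : ContDiff ℝ 1 w

lemma re_d {f : ℝ → ℂ} {f' : ℂ} {y : ℝ} (h : HasDerivAt f f' y) :
    HasDerivAt (fun y => (f y).re) f'.re y :=
  (Complex.reCLM.hasFDerivAt.comp_hasDerivAt y h)

lemma im_d {f : ℝ → ℂ} {f' : ℂ} {y : ℝ} (h : HasDerivAt f f' y) :
    HasDerivAt (fun y => (f y).im) f'.im y :=
  (Complex.imCLM.hasFDerivAt.comp_hasDerivAt y h)

section
variable {K ν κ d2 μ : ℝ} {h w w1 w2 φ φ1 : ℝ → ℂ}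

lemma CS.pr (S : CS K ν κ d2 μ h w w1 w2 φ φ1) (hw : w 1 = 0) (hφ : φ 1 = 0) :
    Pair K (fun y => (w y).re) (fun y => (w1 y).re) (fun y => (w2 y).re) (fun y => (φ y).re)
      (fun y => (φ1 y).re) where
  ca := Complex.continuous_re.comp S.cw
  ca1 := Complex.continuous_re.comp S.cw1
  ca2 := Complex.continuous_re.comp S.cw2
  cp := Complex.continuous_re.comp S.cφ
  cp1 := Complex.continuous_re.comp S.cφ1
  da y hy := re_d (S.dw y hy)
  da1 y hy := re_d (S.dw1 y hy)
  dp y hy := re_d (S.dφ y hy)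
  dp1 y hy := by simpa using re_d (S.dφ1 y hy)
  al := by simp [S.wl]
  ar := by simp [hw]
  pl := by simp [S.φl]
  pr := by simp [hφ]

lemma CS.pi (S : CS K ν κ d2 μ h w w1 w2 φ φ1) (hw : w 1 = 0) (hφ : φ 1 = 0) :
    Pair K (fun y => (w y).im) (fun y => (w1 y).im) (fun y => (w2 y).im) (fun y => (φ y).im)
      (fun y => (φ1 y).im) where
  ca := Complex.continuous_im.comp S.cw
  ca1 := Complex.continuous_im.comp S.cw1
  ca2 := Complex.continuous_im.comp S.cw2
  cp := Complex.continuous_im.comp S.cφ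
  cp1 := Complex.continuous_im.comp S.cφ1
  da y hy := im_d (S.dw y hy)
  da1 y hy := im_d (S.dw1 y hy)
  dp y hy := im_d (S.dφ y hy)
  dp1 y hy := by simpa using im_d (S.dφ1 y hy)
  al := by simp [S.wl]
  ar := by simp [hw]
  pl := by simp [S.φl]
  pr := by simp [hφ]

lemma CS.er (S : CS K ν κ d2 μ h w w1 w2 φ φ1) : ∀ y ∈ Set.Icc (-1:ℝ) 1, (h y).re =
    -κ * ((d2 - y^2) * (w y).im + 2 * (φ y).im) - ν * ((w2 y).re - K * (w y).re) - μ * (w y).re := by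
  intro y hy
  rw [← S.eq y hy]
  simp [pow_two]
  ring

lemma CS.ei (S : CS K ν κ d2 μ h w w1 w2 φ φ1) : ∀ y ∈ Set.Icc (-1:ℝ) 1, (h y).im =
    κ * ((d2 - y^2) * (w y).re + 2 * (φ y).re) - ν * ((w2 y).im - K * (w y).im) - μ * (w y).im := by
  intro y hy
  rw [← S.eq y hy]
  simp [pow_two]
  ring
end

lemma CS.comb {K ν κ d2 μ : ℝ} {h w w1 w2 φ φ1 h' v v1 v2 χ χ1 : ℝ → ℂ}
    (S : CS K ν κ d2 μ h w w1 w2 φ φ1) (T : CS K ν κ d2 μ h' v v1 v2 χ χ1) (c : ℂ) :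
    CS K ν κ d2 μ (fun y => h y + c * h' y) (fun y => w y + c * v y) (fun y => w1 y + c * v1 y)
      (fun y => w2 y + c * v2 y) (fun y => φ y + c * χ y) (fun y => φ1 y + c * χ1 y) where
  cw := S.cw.add (T.cw.const_mul c)
  cw1 := S.cw1.add (T.cw1.const_mul c)
  cw2 := S.cw2.add (T.cw2.const_mul c)
  cφ := S.cφ.add (T.cφ.const_mul c)
  cφ1 := S.cφ1.add (T.cφ1.const_mul c)
  dw y hy := (S.dw y hy).add ((T.dw y hy).const_mul c)
  dw1 y hy := (S.dw1 y hy).add ((T.dw1 y hy).const_mul c)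
  dφ y hy := (S.dφ y hy).add ((T.dφ y hy).const_mul c)
  dφ1 y hy := ((S.dφ1 y hy).add ((T.dφ1 y hy).const_mul c)).congr_deriv (by ring)
  wl := by simp [S.wl, T.wl]
  φl := by simp [S.φl, T.φl]
  eq y hy := by rw [← S.eq y hy, ← T.eq y hy]; ring
  cd := S.cd.add (contDiff_const.mul T.cd)

lemma ivp (K ν κ d2 μ : ℝ) (hν : 0 < ν) (hK : 1 ≤ K) (h : ℝ → ℂ) (hh : Continuous h) (A B : ℂ) :
    ∃ w w1 w2 φ φ1, CS K ν κ d2 μ h w w1 w2 φ φ1 ∧ φ1 (-1) = A ∧ w1 (-1) = B := by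
  have hν' : (ν:ℂ) ≠ 0 := by exact_mod_cast hν.ne'
  let f : ℝ → (ℂ × ℂ × ℂ × ℂ) → (ℂ × ℂ × ℂ × ℂ) := fun t x =>
    (x.2.1, x.2.2.1 + K * x.1, x.2.2.2, K * x.2.2.1 + (ν:ℂ)⁻¹ *
      (Complex.I * κ * (((d2:ℂ) - (t:ℂ)^2) * x.2.2.1 + 2 * x.1) - μ * x.2.2.1 - h t))
  have hf : Continuous (fun z : ℝ × (ℂ × ℂ × ℂ × ℂ) => f z.1 z.2) := by
    have : Continuous (fun z : ℝ × (ℂ × ℂ × ℂ × ℂ) => h z.1) := hh.comp continuous_fst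
    simp only [f]
    fun_prop
  obtain ⟨Y, g, hg, hY, hY0, hgf⟩ := lin_ode f hf (1 + K + K + ν⁻¹ * (|κ| * (|d2| + 1 + 2) + |μ|))
    (by positivity) (by
      intro t ht x y
      have hK0 : (0:ℝ) ≤ K := by linarith
      have e : f t x - f t y = ((x - y).2.1, (x - y).2.2.1 + K * (x - y).1, (x - y).2.2.2,
        K * (x - y).2.2.1 + (ν:ℂ)⁻¹ *
        (Complex.I * κ * (((d2:ℂ) - (t:ℂ)^2) * (x - y).2.2.1 + 2 * (x - y).1) - μ * (x - y).2.2.1)) := by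
        simp only [f, Prod.ext_iff, Prod.fst_sub, Prod.snd_sub]
        refine ⟨trivial, ?_, trivial, ?_⟩ <;> ring
      rw [e]
      generalize x - y = z
      have z1 : ‖z.1‖ ≤ ‖z‖ := norm_fst_le z
      have z2' : ‖z.2‖ ≤ ‖z‖ := norm_snd_le z
      have z2 : ‖z.2.1‖ ≤ ‖z‖ := (norm_fst_le z.2).trans z2'
      have z3' : ‖z.2.2‖ ≤ ‖z‖ := (norm_snd_le z.2).trans z2'
      have z3 : ‖z.2.2.1‖ ≤ ‖z‖ := (norm_fst_le z.2.2).trans z3'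
      have z4 : ‖z.2.2.2‖ ≤ ‖z‖ := (norm_snd_le z.2.2).trans z3'
      have hz := norm_nonneg z
      have hL : 0 ≤ ν⁻¹ * (|κ| * (|d2| + 1 + 2) + |μ|) := by positivity
      have one : ‖z‖ ≤ (1 + K + K + ν⁻¹ * (|κ| * (|d2| + 1 + 2) + |μ|)) * ‖z‖ := by nlinarith
      refine max_le (z2.trans one) (max_le ?_ (max_le (z4.trans one) ?_))
      · refine (norm_add_le _ _).trans ?_
        rw [norm_mul, Complex.norm_real, Real.norm_of_nonneg hK0]
        have := mul_le_mul_of_nonneg_left z1 hK0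
        nlinarith [mul_nonneg hL hz, mul_nonneg hK0 hz]
      · have ht2 : ‖(d2:ℂ) - (t:ℂ)^2‖ ≤ |d2| + 1 := by
          have : (d2:ℂ) - (t:ℂ)^2 = ((d2 - t^2 : ℝ):ℂ) := by push_cast; ring
          rw [this, Complex.norm_real, Real.norm_eq_abs]
          refine (abs_sub _ _).trans ?_
          have : |t^2| ≤ 1 := by rw [abs_of_nonneg (sq_nonneg t)]; nlinarith [ht.1, ht.2]
          linarith
        have s1 : ‖((d2:ℂ) - (t:ℂ)^2) * z.2.2.1 + 2 * z.1‖ ≤ (|d2| + 1 + 2) * ‖z‖ := by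
          refine (norm_add_le _ _).trans ?_
          rw [norm_mul, norm_mul]
          have := mul_le_mul ht2 z3 (norm_nonneg _) (by positivity)
          have h2 : ‖(2:ℂ)‖ = 2 := by simp
          rw [h2]
          linarith
        have s2 : ‖Complex.I * κ * (((d2:ℂ) - (t:ℂ)^2) * z.2.2.1 + 2 * z.1) - μ * z.2.2.1‖ ≤
            (|κ| * (|d2| + 1 + 2) + |μ|) * ‖z‖ := by
          refine (norm_sub_le _ _).trans ?_
          rw [norm_mul, norm_mul, norm_mul, Complex.norm_I, Complex.norm_real, Complex.norm_real,
            Real.norm_eq_abs, Real.norm_eq_abs, one_mul]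
          have := mul_le_mul_of_nonneg_left s1 (abs_nonneg κ)
          have := mul_le_mul_of_nonneg_left z3 (abs_nonneg μ)
          linarith
        refine (norm_add_le _ _).trans ?_
        rw [norm_mul, norm_mul, Complex.norm_real, Real.norm_of_nonneg hK0, norm_inv,
          Complex.norm_real, Real.norm_of_nonneg hν.le]
        have q1 := mul_le_mul_of_nonneg_left z3 hK0
        have q2 := mul_le_mul_of_nonneg_left s2 (inv_pos.2 hν).le
        have q3 := mul_nonneg hK0 hz
        linarith)
    (0, A, 0, B)
  have cY : Continuous Y := continuous_iff_continuousAt.2 fun t => (hY t).continuousAt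
  have d1 : ∀ t, HasDerivAt (fun t => (Y t).1) (g t).1 t := fun t =>
    (ContinuousLinearMap.fst ℝ ℂ (ℂ × ℂ × ℂ)).hasFDerivAt.comp_hasDerivAt t (hY t)
  have d' : ∀ t, HasDerivAt (fun t => (Y t).2) (g t).2 t := fun t =>
    (ContinuousLinearMap.snd ℝ ℂ (ℂ × ℂ × ℂ)).hasFDerivAt.comp_hasDerivAt t (hY t)
  have d2' : ∀ t, HasDerivAt (fun t => (Y t).2.1) (g t).2.1 t := fun t =>
    (ContinuousLinearMap.fst ℝ ℂ (ℂ × ℂ)).hasFDerivAt.comp_hasDerivAt t (d' t)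
  have d'' : ∀ t, HasDerivAt (fun t => (Y t).2.2) (g t).2.2 t := fun t =>
    (ContinuousLinearMap.snd ℝ ℂ (ℂ × ℂ)).hasFDerivAt.comp_hasDerivAt t (d' t)
  have d3 : ∀ t, HasDerivAt (fun t => (Y t).2.2.1) (g t).2.2.1 t := fun t =>
    (ContinuousLinearMap.fst ℝ ℂ (ℂ)).hasFDerivAt.comp_hasDerivAt t (d'' t)
  have d4 : ∀ t, HasDerivAt (fun t => (Y t).2.2.2) (g t).2.2.2 t := fun t =>
    (ContinuousLinearMap.snd ℝ ℂ (ℂ)).hasFDerivAt.comp_hasDerivAt t (d'' t)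
  refine ⟨fun t => (Y t).2.2.1, fun t => (Y t).2.2.2, fun t => (g t).2.2.2, fun t => (Y t).1,
    fun t => (Y t).2.1, ⟨by fun_prop, by fun_prop, by fun_prop, by fun_prop, by fun_prop,
    ?_, ?_, ?_, ?_, by simp [hY0], by simp [hY0], ?_, ?_⟩, by simp [hY0], by simp [hY0]⟩
  · exact fun t ht => (d3 t).congr_deriv (by rw [hgf t ht])
  · exact fun t ht => d4 t
  · exact fun t ht => (d1 t).congr_deriv (by rw [hgf t ht])
  · exact fun t ht => (d2' t).congr_deriv (by rw [hgf t ht])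
  · intro t ht
    simp only [hgf t ht, f]
    field_simp
    ring
  · rw [contDiff_one_iff_deriv]
    refine ⟨fun t => (d3 t).differentiableAt, ?_⟩
    have : deriv (fun t => (Y t).2.2.1) = fun t => (g t).2.2.1 := funext fun t => (d3 t).deriv
    rw [this]; fun_prop

lemma CS.est {K ν κ d2 ε : ℝ} {h w w1 w2 φ φ1 : ℝ → ℂ} (hν : 0 < ν) (hK : 1 ≤ K) (hκ : κ ≠ 0)
    (hε0 : 0 ≤ ε) (hε : ε ≤ 1/2 * (1/10^4)^4) (hh : Continuous h)
    (S : CS K ν κ d2 (ε * √(ν * |κ|)) h w w1 w2 φ φ1) (hw : w 1 = 0) (hφ : φ 1 = 0) :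
    ((1/2 * (1/10^4)^4) * √(ν * |κ|) * nn (fun y => (w y).re) (fun y => (w y).im) ≤
      nn (fun y => (h y).re) (fun y => (h y).im) ∧
    (nn (fun y => (h y).re) (fun y => (h y).im) = 0 →
      nn (fun y => (φ1 y).re) (fun y => (φ1 y).im) = 0)) ∧
    (∫ y in (-1:ℝ)..1, ((h y).re * (w y).re + (h y).im * (w y).im)) =
      ν * (nn (fun y => (w1 y).re) (fun y => (w1 y).im) ^ 2 + K *
        nn (fun y => (w y).re) (fun y => (w y).im) ^ 2) - (ε * √(ν * |κ|)) *
        nn (fun y => (w y).re) (fun y => (w y).im) ^ 2 :=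
  ⟨p1_scaled (S.pr hw hφ) (S.pi hw hφ) (fun y => (h y).re) (fun y => (h y).im)
    (Complex.continuous_re.comp hh) (Complex.continuous_im.comp hh) κ d2 ν ε hκ hK hν hε0 hε
    S.er S.ei, e1 (S.pr hw hφ) (S.pi hw hφ) (fun y => (h y).re) (fun y => (h y).im)
    (Complex.continuous_re.comp hh) (Complex.continuous_im.comp hh) κ d2 ν _ S.er S.ei⟩

lemma nn_zero' {f : ℝ → ℂ} (hf : Continuous f) (h : nn (fun y => (f y).re) (fun y => (f y).im) = 0) :
    ∀ y ∈ Set.Icc (-1:ℝ) 1, f y = 0 := fun y hy => by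
  have := nn_zero (Complex.continuous_re.comp hf) (Complex.continuous_im.comp hf) h y hy
  exact Complex.ext this.1 this.2

lemma CS.uniq {K ν κ d2 ε : ℝ} {h w w1 w2 φ φ1 : ℝ → ℂ} (hν : 0 < ν) (hK : 1 ≤ K) (hκ : κ ≠ 0)
    (hε0 : 0 ≤ ε) (hε : ε ≤ 1/2 * (1/10^4)^4) (hh : h = fun _ => 0)
    (S : CS K ν κ d2 (ε * √(ν * |κ|)) h w w1 w2 φ φ1) (hw : w 1 = 0) (hφ : φ 1 = 0) :
    φ1 (-1) = 0 ∧ w1 (-1) = 0 := by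
  have m1 : (-1:ℝ) ∈ Set.Icc (-1:ℝ) 1 := by norm_num
  obtain ⟨⟨h1, h2⟩, h3⟩ := S.est hν hK hκ hε0 hε (by rw [hh]; fun_prop) hw hφ
  have h0 : nn (fun y => (h y).re) (fun y => (h y).im) = 0 := by
    rw [hh]; simp [nn]
  refine ⟨nn_zero' S.cφ1 (h2 h0) _ m1, nn_zero' S.cw1 ?_ _ m1⟩
  rw [h0] at h1
  have hs : 0 < √(ν * |κ|) := Real.sqrt_pos.2 (mul_pos hν (abs_pos.2 hκ))
  have hn0 := nn_nonneg (fun y => (w y).re) (fun y => (w y).im)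
  have hn : nn (fun y => (w y).re) (fun y => (w y).im) = 0 := by
    by_contra hne
    have := lt_of_le_of_ne hn0 (Ne.symm hne)
    have : 0 < (1/2 * (1/10^4)^4) * √(ν * |κ|) * nn (fun y => (w y).re) (fun y => (w y).im) := by
      positivity
    linarith
  rw [hn] at h3
  have : (∫ y in (-1:ℝ)..1, ((h y).re * (w y).re + (h y).im * (w y).im)) = 0 := by
    rw [hh]; simp
  rw [this] at h3
  have h4 : ν * nn (fun y => (w1 y).re) (fun y => (w1 y).im) ^ 2 = 0 := by linarith
  rcases mul_eq_zero.1 h4 with h5 | h5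
  · exact absurd h5 hν.ne'
  · exact pow_eq_zero_iff (by norm_num) |>.1 h5

lemma bvp (K ν κ d2 ε : ℝ) (hν : 0 < ν) (hK : 1 ≤ K) (hκ : κ ≠ 0)
    (hε0 : 0 ≤ ε) (hε : ε ≤ 1/2 * (1/10^4)^4) (h : ℝ → ℂ) (hh : Continuous h) :
    ∃ w w1 w2 φ φ1, CS K ν κ d2 (ε * √(ν * |κ|)) h w w1 w2 φ φ1 ∧ w 1 = 0 ∧ φ 1 = 0 := by
  obtain ⟨w, w1, w2, φ, φ1, S, -, -⟩ := ivp K ν κ d2 (ε * √(ν * |κ|)) hν hK h hh 0 0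
  obtain ⟨u, u1, u2, ψ, ψ1, T, hT1, hT2⟩ := ivp K ν κ d2 (ε * √(ν * |κ|)) hν hK (fun _ => 0)
    (by fun_prop) 1 0
  obtain ⟨v, v1, v2, χ, χ1, R, hR1, hR2⟩ := ivp K ν κ d2 (ε * √(ν * |κ|)) hν hK (fun _ => 0)
    (by fun_prop) 0 1
  let L : (ℂ × ℂ) →ₗ[ℂ] (ℂ × ℂ) :=
    { toFun := fun x => (x.1 * u 1 + x.2 * v 1, x.1 * ψ 1 + x.2 * χ 1)
      map_add' := fun x y => by ext <;> simp <;> ring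
      map_smul' := fun c x => by ext <;> simp <;> ring }
  have hL : Function.Injective L := by
    rw [← LinearMap.ker_eq_bot, LinearMap.ker_eq_bot']
    intro x hx
    have hx1 : x.1 * u 1 + x.2 * v 1 = 0 := congrArg Prod.fst hx
    have hx2 : x.1 * ψ 1 + x.2 * χ 1 = 0 := congrArg Prod.snd hx
    have Q := ((T.comb T (x.1 - 1)).comb R x.2).uniq hν hK hκ hε0 hε (by simp)
      (by linear_combination hx1) (by linear_combination hx2)
    simp only [hT1, hT2, hR1, hR2] at Q
    refine Prod.ext ?_ ?_
    · have := Q.1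
      simp only [Prod.fst_zero]
      linear_combination this
    · have := Q.2
      simp only [Prod.snd_zero]
      linear_combination this
  have hs : Function.Surjective L := LinearMap.injective_iff_surjective.1 hL
  obtain ⟨x, hx⟩ := hs (-w 1, -φ 1)
  have hx1 : x.1 * u 1 + x.2 * v 1 = - w 1 := congrArg Prod.fst hx
  have hx2 : x.1 * ψ 1 + x.2 * χ 1 = - φ 1 := congrArg Prod.snd hx
  have Q := (S.comb T x.1).comb R x.2
  simp only [mul_zero, add_zero] at Q
  refine ⟨_, _, _, _, _, Q, ?_, ?_⟩
  · linear_combination hx1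
  · linear_combination hx2

lemma l2_nn (f : ℝ → ℂ) : l2 f = nn (fun y => (f y).re) (fun y => (f y).im) := by
  unfold l2 nn
  congr 2
  ext y
  rw [Complex.sq_norm, Complex.normSq_apply]; ring

lemma l2_sq (f : ℝ → ℂ) : l2 f ^ 2 = ∫ y in (-1:ℝ)..1, ‖f y‖ ^ 2 :=
  Real.sq_sqrt (intervalIntegral.integral_nonneg (by norm_num) fun y _ => by positivity)

lemma l2_nonneg (f : ℝ → ℂ) : 0 ≤ l2 f := Real.sqrt_nonneg _

lemma l2_congr {f g : ℝ → ℂ} (h : ∀ y ∈ Set.Icc (-1:ℝ) 1, f y = g y) : l2 f = l2 g := by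
  unfold l2
  congr 1
  apply intervalIntegral.integral_congr
  intro y hy
  rw [Set.uIcc_of_le (by norm_num)] at hy
  simp only [h y hy]

lemma hk_sq (k₁ k₃ : ℤ) (f : ℝ → ℂ) :
    hk k₁ k₃ f ^ 2 = l2 (deriv f) ^ 2 + kabs k₁ k₃ ^ 2 * l2 f ^ 2 := by
  unfold hk
  rw [← l2_sq, ← l2_sq, Real.sq_sqrt (by positivity)]

lemma hk_nonneg (k₁ k₃ : ℤ) (f : ℝ → ℂ) : 0 ≤ hk k₁ k₃ f := Real.sqrt_nonneg _

lemma hk_smul (k₁ k₃ : ℤ) (c : ℝ) (hc : 0 ≤ c) (f : ℝ → ℂ) (hf : ContDiff ℝ 1 f) :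
    hk k₁ k₃ (fun y => (c:ℂ) * f y) = c * hk k₁ k₃ f := by
  have hd : deriv (fun y => (c:ℂ) * f y) = fun y => (c:ℂ) * deriv f y := by
    ext y
    exact deriv_const_mul _ (hf.differentiable (by norm_num) y)
  have hl : ∀ g : ℝ → ℂ, l2 (fun y => (c:ℂ) * g y) = c * l2 g := by
    intro g
    simp only [l2_nn]
    rw [← nn_smul c hc]
    simp
  rw [← sq_eq_sq₀ (hk_nonneg _ _ _) (mul_nonneg hc (hk_nonneg _ _ _)), mul_pow, hk_sq, hk_sq, hd,
    hl, hl]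
  ring

lemma l2_le_hk {k₁ k₃ : ℤ} (hK : 1 ≤ kabs k₁ k₃ ^ 2) (f : ℝ → ℂ) : l2 f ≤ hk k₁ k₃ f := by
  apply le_of_sq_le_sq _ (hk_nonneg _ _ _)
  rw [hk_sq]
  nlinarith [sq_nonneg (l2 (deriv f)), sq_nonneg (l2 f)]

lemma dl2_le_hk {k₁ k₃ : ℤ} (f : ℝ → ℂ) : l2 (deriv f) ≤ hk k₁ k₃ f := by
  apply le_of_sq_le_sq _ (hk_nonneg _ _ _)
  rw [hk_sq]
  have : 0 ≤ kabs k₁ k₃ ^2 * l2 f^2 := by positivity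
  linarith

lemma cs_c {F g : ℝ → ℂ} (hF : Continuous F) (hg : Continuous g) :
    ‖∫ y in (-1:ℝ)..1, F y * (starRingEnd ℂ) (g y)‖ ≤ l2 F * l2 g := by
  refine (intervalIntegral.norm_integral_le_integral_norm (by norm_num)).trans ?_
  have := (abs_le.1 (cs (fun y => ‖F y‖) (fun _ => 0) (fun y => ‖g y‖) (fun _ => 0) (by fun_prop)
    (by fun_prop) (by fun_prop) (by fun_prop))).2
  simpa [nn, l2] using this

lemma hm1_bdd {k₁ k₃ : ℤ} (hK : 1 ≤ kabs k₁ k₃ ^ 2) {F : ℝ → ℂ} (hF : Continuous F) :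
    BddAbove { r : ℝ | ∃ g : ℝ → ℂ, ContDiff ℝ 1 g ∧ g (-1) = 0 ∧ g 1 = 0 ∧
      hk k₁ k₃ g ≤ 1 ∧ r = ‖∫ y in (-1:ℝ)..1, F y * (starRingEnd ℂ) (g y)‖ } := by
  refine ⟨l2 F, ?_⟩
  rintro r ⟨g, hg, -, -, h1, rfl⟩
  refine (cs_c hF hg.continuous).trans ?_
  have := (l2_le_hk hK g).trans h1
  nlinarith [l2_nonneg F]

lemma hm1_le {k₁ k₃ : ℤ} (hK : 1 ≤ kabs k₁ k₃ ^ 2) {F : ℝ → ℂ} (hF : Continuous F) {g : ℝ → ℂ}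
    (hg : ContDiff ℝ 1 g) (h1 : g (-1) = 0) (h2 : g 1 = 0) :
    ‖∫ y in (-1:ℝ)..1, F y * (starRingEnd ℂ) (g y)‖ ≤ hm1 k₁ k₃ F * hk k₁ k₃ g := by
  rcases (hk_nonneg k₁ k₃ g).eq_or_lt with h | h
  · have h0 : l2 g = 0 := le_antisymm (h ▸ l2_le_hk hK g) (l2_nonneg _)
    have := cs_c hF hg.continuous
    rw [h0] at this
    rw [← h]; simpa using this
  · have hm := le_csSup (hm1_bdd hK hF) ⟨fun y => (((hk k₁ k₃ g)⁻¹ : ℝ):ℂ) * g y,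
      contDiff_const.mul hg, by simp [h1], by simp [h2],
      by rw [hk_smul _ _ _ (by positivity) _ hg, inv_mul_cancel₀ h.ne'], rfl⟩
    have e : (∫ y in (-1:ℝ)..1, F y * (starRingEnd ℂ) ((((hk k₁ k₃ g)⁻¹ : ℝ):ℂ) * g y)) =
        (((hk k₁ k₃ g)⁻¹ : ℝ):ℂ) * ∫ y in (-1:ℝ)..1, F y * (starRingEnd ℂ) (g y) := by
      rw [← intervalIntegral.integral_const_mul]
      congr 1
      ext y
      rw [map_mul, Complex.conj_ofReal]; ring
    rw [e, norm_mul, Complex.norm_real, Real.norm_of_nonneg (by positivity), inv_mul_le_iff₀ h] at hm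
    rw [mul_comm]
    exact hm

lemma hm1_nonneg (k₁ k₃ : ℤ) (F : ℝ → ℂ) : 0 ≤ hm1 k₁ k₃ F := by
  apply Real.sSup_nonneg
  rintro r ⟨g, -, -, -, -, rfl⟩
  exact norm_nonneg _

lemma hm1_congr (k₁ k₃ : ℤ) {F G : ℝ → ℂ} (h : ∀ y ∈ Set.Icc (-1:ℝ) 1, F y = G y) :
    hm1 k₁ k₃ F = hm1 k₁ k₃ G := by
  have : ∀ g : ℝ → ℂ, (∫ y in (-1:ℝ)..1, F y * (starRingEnd ℂ) (g y)) =
      ∫ y in (-1:ℝ)..1, G y * (starRingEnd ℂ) (g y) := by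
    intro g
    apply intervalIntegral.integral_congr
    intro y hy
    rw [Set.uIcc_of_le (by norm_num)] at hy
    simp only [h y hy]
  unfold hm1
  simp only [this]

lemma duality {K ν κ d2 μ : ℝ} {F w w1 w2 φ φ1 v v1 v2 χ χ1 : ℝ → ℂ} (hF : Continuous F)
    (S : CS K ν κ d2 μ F w w1 w2 φ φ1) (T : CS K ν (-κ) d2 μ w v v1 v2 χ χ1)
    (hw : w 1 = 0) (hφ : φ 1 = 0) (hv : v 1 = 0) (hχ : χ 1 = 0) :
    (∫ y in (-1:ℝ)..1, F y * (starRingEnd ℂ) (v y)) = ((l2 w ^ 2 : ℝ) : ℂ) := by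
  have := S.cw; have := T.cw
  have h1 : ((l2 w ^ 2 : ℝ) : ℂ) = ∫ y in (-1:ℝ)..1, w y * (starRingEnd ℂ) (w y) := by
    rw [l2_sq, ← intervalIntegral.integral_ofReal]
    congr 1
    ext y
    rw [Complex.mul_conj, Complex.normSq_eq_norm_sq]
  have cc : Continuous (starRingEnd ℂ) := Complex.continuous_conj
  have i1 : Continuous (fun y => F y * (starRingEnd ℂ) (v y)) := by fun_prop
  have i2 : Continuous (fun y => w y * (starRingEnd ℂ) (w y)) := by fun_prop
  rw [h1, ← sub_eq_zero, ← intervalIntegral.integral_sub (i1.intervalIntegrable _ _)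
    (i2.intervalIntegrable _ _)]
  have cj : ∀ {f : ℝ → ℂ} {f' : ℂ} {y : ℝ}, HasDerivAt f f' y →
      HasDerivAt (fun y => (starRingEnd ℂ) (f y)) ((starRingEnd ℂ) f') y := fun h => h.star
  rw [intervalIntegral.integral_eq_sub_of_hasDerivAt (f := fun y =>
    -(ν:ℂ) * (w1 y * (starRingEnd ℂ) (v y) - w y * (starRingEnd ℂ) (v1 y)) +
    2 * Complex.I * κ * (φ y * (starRingEnd ℂ) (χ1 y) - φ1 y * (starRingEnd ℂ) (χ y)))]
  · simp [S.wl, S.φl, T.wl, T.φl, hw, hφ, hv, hχ]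
  · intro y hy
    rw [Set.uIcc_of_le (by norm_num)] at hy
    refine (((((S.dw1 y hy).mul (cj (T.dw y hy))).sub ((S.dw y hy).mul
      (cj (T.dw1 y hy)))).const_mul (-(ν:ℂ))).add ((((S.dφ y hy).mul (cj (T.dφ1 y hy))).sub
      ((S.dφ1 y hy).mul (cj (T.dφ y hy)))).const_mul (2 * Complex.I * κ))).congr_deriv ?_
    have ew := congrArg (starRingEnd ℂ) (T.eq y hy)
    simp only [map_add, map_sub, map_mul, map_neg, Complex.conj_ofReal, Complex.conj_I, map_pow,
      map_ofNat, Complex.ofReal_neg] at ew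
    rw [← S.eq y hy]
    simp only [map_add, map_sub, map_mul, map_neg, Complex.conj_ofReal, Complex.conj_I, map_pow,
      map_ofNat, Complex.ofReal_neg]
    linear_combination (-w y) * ew
  · exact (i1.sub i2).intervalIntegrable _ _


lemma final_alg (c ν S s4 n m Hv Hw hm ε I1 : ℝ) (hc : 0 < c) (hc1 : c ≤ 1) (hν : 0 < ν) (hS : 0 < S)
    (hs4 : 0 ≤ s4) (hs : s4^2 = ν * S) (hn : 0 ≤ n) (hm0 : 0 ≤ m) (hHv : 0 ≤ Hv) (hHw : 0 ≤ Hw)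
    (hhm : 0 ≤ hm) (hε0 : 0 ≤ ε) (hε : ε ≤ 1)
    (h1 : c * S * m ≤ n) (h2 : ν * Hv^2 - ε * S * m^2 ≤ n * m) (h3 : n^2 ≤ hm * Hv)
    (h4 : I1 ≤ hm * Hw) (h5 : I1 = ν * Hw^2 - ε * S * n^2) :
    ν * Hw + s4 * n ≤ (1 + 4 / c) * hm := by
  have a1 : c^2 * S * (ν * Hv^2) ≤ 2 * n^2 := by
    have b1 : ε * S * m^2 ≤ S * m^2 := by
      have : 0 ≤ S * m^2 := by positivity
      nlinarith
    have b2 : (c * S * m)^2 ≤ n^2 := pow_le_pow_left₀ (by positivity) h1 2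
    have b3 : c * S * m * n ≤ n * n := mul_le_mul_of_nonneg_right h1 hn
    have b4 : c * (c * S * m * n) ≤ 1 * (n * n) := mul_le_mul hc1 b3 (by positivity) (by norm_num)
    have b5 : c^2 * S * (ν * Hv^2) ≤ c^2 * S * (n * m + S * m^2) :=
      mul_le_mul_of_nonneg_left (by linarith) (by positivity)
    nlinarith
  have a2 : c^2 * (s4 * n)^2 ≤ 2 * hm^2 := by
    rcases hn.eq_or_lt with h | h
    · rw [← h]; simp; positivity
    · have hn2 : 0 < n^2 := by positivity
      have d1 : (n^2)^2 ≤ hm^2 * Hv^2 := by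
        rw [← mul_pow]; exact pow_le_pow_left₀ hn2.le h3 2
      have d2 : (c^2 * (ν * S)) * (n^2)^2 ≤ (c^2 * (ν * S)) * (hm^2 * Hv^2) :=
        mul_le_mul_of_nonneg_left d1 (by positivity)
      have d3 : hm^2 * (c^2 * S * (ν * Hv^2)) ≤ hm^2 * (2 * n^2) :=
        mul_le_mul_of_nonneg_left a1 (by positivity)
      have d4 : (c^2 * (s4 * n)^2) * n^2 ≤ (2 * hm^2) * n^2 := by
        rw [mul_pow, hs]; nlinarith
      exact le_of_mul_le_mul_right d4 hn2
  have a3 : s4 * n ≤ 2 / c * hm := by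
    apply le_of_sq_le_sq _ (by positivity)
    have : (2 / c * hm)^2 = (4 * hm^2) / c^2 := by field_simp; ring
    rw [this, le_div_iff₀ (by positivity)]
    nlinarith [sq_nonneg hm]
  have a4 : ν * Hw ≤ (1 + 2 / c) * hm := by
    have e1 : (ν * Hw)^2 ≤ hm * (ν * Hw) + (s4 * n)^2 := by
      have f1 : ν * Hw^2 ≤ hm * Hw + S * n^2 := by
        have : ε * S * n^2 ≤ S * n^2 := by
          have : 0 ≤ S * n^2 := by positivity
          nlinarith
        linarith
      have := mul_le_mul_of_nonneg_left f1 hν.le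
      rw [mul_pow s4, hs]
      nlinarith
    have e2 : (s4 * n)^2 ≤ (2 / c * hm)^2 := pow_le_pow_left₀ (by positivity) a3 2
    have hq : 0 ≤ 2 / c * hm := by positivity
    rw [add_mul, one_mul]
    generalize 2 / c * hm = q at *
    by_contra hcon
    push Not at hcon
    nlinarith
  have : (1 + 4 / c) * hm = (1 + 2 / c) * hm + 2 / c * hm := by ring
  linarith


/-- **Resolvent estimate with Navier-slip boundary condition, `F ∈ H⁻¹_k`**
(Proposition 2.9): `ν‖w'‖_{L²} + ν^{3/4}|k₁|^{1/4}‖w‖_{L²} ≤ C‖F‖_{H⁻¹_k}`. -/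
theorem OS_slip_resolvent_Hm1 :
    ∃ ε₀ ν₀ C : ℝ, 0 < ε₀ ∧ ε₀ < 1 ∧ 0 < ν₀ ∧ ν₀ < 1 ∧ 0 < C ∧
      ∀ (ν ε lam : ℝ) (k₁ k₃ : ℤ) (w φ F : ℝ → ℂ),
        0 < ν → ν ≤ ν₀ → 0 < ε → ε ≤ ε₀ → 1 ≤ |k₁| →
        IntervalIntegrable (fun y => ‖F y‖ ^ 2) MeasureTheory.volume (-1) 1 →
        OSslipE ν k₁ k₃ (lam : ℂ) ε w φ F →
        ν * l2 (deriv w) + ν ^ ((3:ℝ)/4) * |(k₁ : ℝ)| ^ ((1:ℝ)/4) * l2 w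
          ≤ C * hm1 k₁ k₃ F := by

  refine ⟨1/2 * (1/10^4)^4, 1/2, 1 + 4 / (1/2 * (1/10^4)^4), by norm_num, by norm_num, by norm_num,
    by norm_num, by norm_num, ?_⟩
  intro ν ε lam k₁ k₃ w φ F hν hν1 hε0 hε hk1 _ hOS
  obtain ⟨hw2, hφ2, heq, hφe, hφl, hφr, hdl, hdr⟩ := hOS
  have m1 : (-1:ℝ) ∈ Set.Icc (-1:ℝ) 1 := by norm_num
  have m2 : (1:ℝ) ∈ Set.Icc (-1:ℝ) 1 := by norm_num
  have hκ1 : (1:ℝ) ≤ |(k₁:ℝ)| := by exact_mod_cast hk1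
  have hκ : (k₁:ℝ) ≠ 0 := fun h => by rw [h] at hκ1; norm_num at hκ1
  have hK : 1 ≤ kabs k₁ k₃ ^ 2 := by
    unfold kabs
    rw [Real.sq_sqrt (by positivity), ← sq_abs (k₁:ℝ)]
    nlinarith [sq_nonneg (k₃:ℝ)]
  have cw := hw2.continuous
  have cφ := hφ2.continuous
  have hw1 : ContDiff ℝ 1 (deriv w) := ((contDiff_succ_iff_deriv (n := 1)).1 hw2).2.2
  have hφ1 : ContDiff ℝ 1 (deriv φ) := ((contDiff_succ_iff_deriv (n := 1)).1 hφ2).2.2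
  have cw1 := hw1.continuous
  have cw2 : Continuous (deriv (deriv w)) := hw1.continuous_deriv (by norm_num)
  obtain ⟨G, hG⟩ : ∃ G : ℝ → ℂ, G = fun y =>
    -(ν : ℂ) * (deriv (deriv w) y - ((kabs k₁ k₃ : ℝ) : ℂ) ^ 2 * w y) +
      Complex.I * (k₁ : ℂ) * ((1 - (y : ℂ) ^ 2 - lam) * w y + 2 * φ y) -
      ((ε * Real.sqrt (ν * |(k₁ : ℝ)|) : ℝ) : ℂ) * w y := ⟨_, rfl⟩
  have cG : Continuous G := by rw [hG]; fun_prop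
  have hFG : hm1 k₁ k₃ F = hm1 k₁ k₃ G := hm1_congr _ _ fun y hy => by rw [hG, ← heq y hy]
  have S : CS (kabs k₁ k₃ ^ 2) ν k₁ (1 - lam) (ε * √(ν * |(k₁:ℝ)|)) G w (deriv w) (deriv (deriv w)) φ
      (deriv φ) :=
    { cw := cw, cw1 := cw1, cw2 := cw2, cφ := cφ, cφ1 := hφ1.continuous
      dw := fun y _ => (hw2.differentiable (by norm_num) y).hasDerivAt
      dw1 := fun y _ => (hw1.differentiable (by norm_num) y).hasDerivAt
      dφ := fun y _ => (hφ2.differentiable (by norm_num) y).hasDerivAt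
      dφ1 := fun y hy => ((hφ1.differentiable (by norm_num) y).hasDerivAt).congr_deriv (by
        rw [← hφe y hy]; push_cast; ring)
      wl := by rw [← hφe _ m1, hdl, hφl]; simp
      φl := hφl
      eq := fun y _ => by rw [hG]; push_cast; ring
      cd := hw2.of_le (by norm_num) }
  have hwr : w 1 = 0 := by rw [← hφe _ m2, hdr, hφr]; simp
  obtain ⟨v, v1, v2, χ, χ1, T, hv, hχ⟩ := bvp (kabs k₁ k₃ ^ 2) ν (-k₁) (1 - lam) ε hν hK
    (neg_ne_zero.2 hκ) hε0.le hε w cw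
  have T' := T.est hν hK (neg_ne_zero.2 hκ) hε0.le hε cw hv hχ
  have S' := S.est hν hK hκ hε0.le hε cG hwr hφr
  rw [abs_neg] at T T'
  have du := duality cG S T hwr hφr hv hχ
  simp only [← l2_nn] at T' S'
  have dv : l2 (deriv v) = l2 v1 := l2_congr fun y hy => (T.dw y hy).deriv
  have reint : ∀ {f g : ℝ → ℂ}, Continuous f → Continuous g →
      (∫ y in (-1:ℝ)..1, ((f y).re * (g y).re + (f y).im * (g y).im)) ≤
      ‖∫ y in (-1:ℝ)..1, f y * (starRingEnd ℂ) (g y)‖ := by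
    intro f g hf hg
    have cc : Continuous (starRingEnd ℂ) := Complex.continuous_conj
    have hi : IntervalIntegrable (fun y => f y * (starRingEnd ℂ) (g y)) volume (-1) 1 := by
      apply Continuous.intervalIntegrable; fun_prop
    have e : (∫ y in (-1:ℝ)..1, ((f y).re * (g y).re + (f y).im * (g y).im)) =
        (∫ y in (-1:ℝ)..1, f y * (starRingEnd ℂ) (g y)).re := by
      rw [← Complex.reCLM_apply, ← ContinuousLinearMap.intervalIntegral_comp_comm _ hi]
      congr 1
      ext y
      simp
    rw [e]
    exact Complex.re_le_norm _
  have g3 : l2 w ^ 2 ≤ hm1 k₁ k₃ G * hk k₁ k₃ v := by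
    have := hm1_le (k₃ := k₃) hK cG T.cd T.wl hv
    rw [du, Complex.norm_real, Real.norm_of_nonneg (by positivity)] at this
    exact this
  have g4 := (reint cG cw).trans (hm1_le (k₃ := k₃) hK cG S.cd S.wl hwr)
  have g2 := (reint cw T.cw).trans (cs_c cw T.cw)
  rw [T'.2, ← dv, ← hk_sq] at g2
  have g5 := S'.2
  rw [← hk_sq] at g5
  have hk0 : 0 < |(k₁:ℝ)| := by linarith
  have hS : 0 < √(ν * |(k₁:ℝ)|) := Real.sqrt_pos.2 (by positivity)
  have hs4 : (ν ^ ((3:ℝ)/4) * |(k₁ : ℝ)| ^ ((1:ℝ)/4))^2 = ν * √(ν * |(k₁:ℝ)|) := by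
    rw [mul_pow, ← Real.rpow_natCast, ← Real.rpow_natCast, ← Real.rpow_mul hν.le,
      ← Real.rpow_mul hk0.le, Real.sqrt_eq_rpow, Real.mul_rpow hν.le hk0.le, ← mul_assoc]
    congr 1
    · nth_rewrite 2 [← Real.rpow_one ν]
      rw [← Real.rpow_add hν]; norm_num
    · norm_num
  have fin := final_alg (1/2 * (1/10^4)^4) ν (√(ν * |(k₁:ℝ)|)) (ν ^ ((3:ℝ)/4) * |(k₁ : ℝ)| ^ ((1:ℝ)/4))
    (l2 w) (l2 v) (hk k₁ k₃ v) (hk k₁ k₃ w) (hm1 k₁ k₃ G) ε _ (by norm_num) (by norm_num) hν hS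
    (by positivity) hs4 (l2_nonneg _) (l2_nonneg _) (hk_nonneg _ _ _) (hk_nonneg _ _ _)
    (hm1_nonneg _ _ _) hε0.le (hε.trans (by norm_num)) T'.1.1 g2 g3 g4 g5
  rw [hFG]
  have := mul_le_mul_of_nonneg_left (dl2_le_hk (k₁ := k₁) (k₃ := k₃) w) hν.le
  linarith

end
end

section
/- There exist constants ε₀, ν₀ ∈ (0,1) and C > 0, independent of ν, k, λ and ε, such that for every 0 < ν ≤ ν₀, every 0 ≤ ε ≤ ε₀, every k = (k₁,k₃) ∈ ℤ² with |k₁| ≥ 1, every λ ∈ ℝ, every F₁ ∈ L²(I), and every solution w ∈ H²(I) of −ν(∂_y² − |k|²)w + i k₁(1−y²−λ)w − ε(ν|k₁|)^{1/2} w = F₁ on I with w(±1) = 0, one has ν^{3/4}|k₁|^{1/4} ‖(∂_y,|k|)w‖_{L²} + ν^{1/2}|k₁|^{1/2} ‖w‖_{L²} ≤ C ‖F₁‖_{L²}. -/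
open Real MeasureTheory

noncomputable section

/-- The Orr–Sommerfeld equation without nonlocal term:
`-ν(∂_y²-|k|²)w + ik₁(1-y²-λ)w - ε(ν|k₁|)^{1/2}w = F₁` on `[-1,1]`,
with `w(±1) = 0`. -/
def OSlocal (ν : ℝ) (k₁ k₃ : ℤ) (lam ε : ℝ) (w F : ℝ → ℂ) : Prop :=
  ContDiff ℝ 2 w ∧
  (∀ y ∈ Set.Icc (-1:ℝ) 1,
    -(ν : ℂ) * (deriv (deriv w) y - ((kabs k₁ k₃ : ℝ) : ℂ) ^ 2 * w y) +
      Complex.I * (k₁ : ℂ) * ((1 - (y : ℂ) ^ 2 - (lam : ℂ)) * w y) -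
      ((ε * Real.sqrt (ν * |(k₁ : ℝ)|) : ℝ) : ℂ) * w y = F y) ∧
  w (-1) = 0 ∧ w 1 = 0

theorem aux_int (B B' : ℝ → ℝ) (h : ∀ y, HasDerivAt B (B' y) y) (hc : Continuous B')
    (h1 : B 1 = 0) (h2 : B (-1) = 0) : ∫ y in (-1:ℝ)..1, B' y = 0 := by
  rw [intervalIntegral.integral_eq_sub_of_hasDerivAt (fun x _ => h x) (hc.intervalIntegrable _ _),
    h1, h2, sub_zero]

theorem aux_ptw (m d ε q kV φ φ' ψ ψ' u u1 u2 v v1 v2 f g : ℝ) (hm : 0 < m) (hd : 0 < d)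
    (hε0 : 0 ≤ ε) (hε : ε ≤ 1/5000)
    (hu : f = m * d^2 * q * u - kV * v - ε * m * u - m * d^2 * u2)
    (hv : g = m * d^2 * q * v + kV * u - ε * m * v - m * d^2 * v2)
    (hφ : |φ| ≤ 4) (hφ' : d * |φ'| ≤ 4) (hψ : |ψ| ≤ 4 * d) (hkey : m ≤ 2 * (kV * φ + m * ψ')) :
    d^2 * (u1^2+v1^2) + d^2 * q * (u^2+v^2) ≤
      d^2 * (u1^2+v1^2 + u*u2 + v*v2) + (2/5000) * (u^2+v^2) + 1250 / m^2 * (f^2+g^2) ∧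
    u^2+v^2 ≤ 2 * (d^2 * (φ' * (v1*u-u1*v) + φ * (v2*u-u2*v)) +
        (ψ' * (u^2+v^2) + ψ * (2*(u*u1+v*v1)))) + 576 * (d^2 * (u1^2+v1^2))
        + (1/2) * (u^2+v^2) + 64 / m^2 * (f^2+g^2) := by
  obtain ⟨F, hF⟩ : ∃ F, f = m * F := ⟨f / m, by field_simp⟩
  obtain ⟨G, hG⟩ : ∃ G, g = m * G := ⟨g / m, by field_simp⟩
  obtain ⟨W, hW⟩ : ∃ W, kV = m * W := ⟨kV / m, by field_simp⟩
  have e1 : 1250 / m^2 * (f^2+g^2) = 1250 * (F^2+G^2) := by rw [hF, hG]; field_simp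
  have e2 : 64 / m^2 * (f^2+g^2) = 64 * (F^2+G^2) := by rw [hF, hG]; field_simp
  rw [e1, e2]
  have hu' : F = d^2 * q * u - W * v - ε * u - d^2 * u2 := by
    apply mul_left_cancel₀ hm.ne'; rw [← hF, hu, hW]; ring
  have hv' : G = d^2 * q * v + W * u - ε * v - d^2 * v2 := by
    apply mul_left_cancel₀ hm.ne'; rw [← hG, hv, hW]; ring
  have hkey' : 1 ≤ 2 * (W * φ + ψ') := by
    apply le_of_mul_le_mul_left _ hm; rw [hW] at hkey; linarith
  constructor
  · have : d^2 * q * (u^2+v^2) = d^2 * (u*u2+v*v2) + ε*(u^2+v^2) + (F*u+G*v) := by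
      rw [hu', hv']; ring
    have h2 : ε*(u^2+v^2) ≤ 1/5000*(u^2+v^2) := by gcongr
    nlinarith [sq_nonneg (u - 2500 * F), sq_nonneg (v - 2500 * G)]
  · have h1 : W * φ * (u^2+v^2) = d^2 * (φ * (v2*u-u2*v)) + φ * (G*u-F*v) := by
      rw [hu', hv']; ring
    have h2 : u^2+v^2 ≤ 2 * (W*φ + ψ') * (u^2+v^2) := by nlinarith [sq_nonneg u, sq_nonneg v]
    have h3 : φ * (G*u-F*v) ≤ 4 * |G*u-F*v| := by
      calc _ ≤ |φ * (G*u-F*v)| := le_abs_self _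
        _ = |φ| * |G*u-F*v| := abs_mul _ _
        _ ≤ _ := by gcongr
    have h4 : -(d^2 * φ' * (v1*u-u1*v)) ≤ 4 * (d * |v1*u-u1*v|) := by
      calc _ ≤ |d^2 * φ' * (v1*u-u1*v)| := neg_le_abs _
        _ = (d * |φ'|) * (d * |v1*u-u1*v|) := by
          rw [abs_mul, abs_mul, abs_of_pos (by positivity : 0 < d^2)]; ring
        _ ≤ _ := by gcongr
    have h5 : -(ψ * (2*(u*u1+v*v1))) ≤ 8 * (d * |u*u1+v*v1|) := by
      calc _ ≤ |ψ * (2*(u*u1+v*v1))| := neg_le_abs _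
        _ = 2 * (|ψ| * |u*u1+v*v1|) := by
          rw [abs_mul, abs_mul, abs_two]; ring
        _ ≤ 2 * (4 * d * |u*u1+v*v1|) := by gcongr
        _ = _ := by ring
    have h6 : |G*u-F*v| ≤ (1/32) * (u^2+v^2) + 8 * (F^2+G^2) := by
      rw [abs_le]; constructor
      · linarith [sq_nonneg (u + 16*G), sq_nonneg (v - 16*F)]
      · linarith [sq_nonneg (u - 16*G), sq_nonneg (v + 16*F)]
    have h7 : d * |v1*u-u1*v| ≤ 24 * (d^2*(u1^2+v1^2)) + (1/96) * (u^2+v^2) := by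
      rw [← abs_of_pos hd, ← abs_mul, abs_of_pos hd, abs_le]
      constructor
      · linarith [sq_nonneg (u + 48*(d*v1)), sq_nonneg (v - 48*(d*u1))]
      · linarith [sq_nonneg (u - 48*(d*v1)), sq_nonneg (v + 48*(d*u1))]
    have h8 : d * |u*u1+v*v1| ≤ 24 * (d^2*(u1^2+v1^2)) + (1/96) * (u^2+v^2) := by
      rw [← abs_of_pos hd, ← abs_mul, abs_of_pos hd, abs_le]
      constructor
      · linarith [sq_nonneg (u + 48*(d*u1)), sq_nonneg (v + 48*(d*v1))]
      · linarith [sq_nonneg (u - 48*(d*u1)), sq_nonneg (v - 48*(d*v1))]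
    linarith

theorem aux_arctan_abs (t : ℝ) : |arctan t| ≤ 2 := by
  rw [abs_le]
  constructor <;> linarith [arctan_lt_pi_div_two t, neg_pi_div_two_lt_arctan t, pi_lt_four]

theorem aux_mul_arctan (t : ℝ) : 0 ≤ t * arctan t := by
  rcases le_total 0 t with h | h
  · exact mul_nonneg h (arctan_nonneg.2 h)
  · exact mul_nonneg_of_nonpos_of_nonpos h (by rw [← arctan_zero]; exact arctan_mono h)

theorem aux_mul_arctan_ge (t : ℝ) (ht : 1 ≤ |t|) : 3/4 ≤ t * arctan t := by
  have key : ∀ s : ℝ, 1 ≤ s → 3/4 ≤ s * arctan s := by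
    intro s hs
    have h1 : π / 4 ≤ arctan s := by rw [← arctan_one]; exact arctan_mono hs
    nlinarith [pi_gt_three]
  rcases le_total 0 t with h | h
  · exact key t (by rwa [abs_of_nonneg h] at ht)
  · have := key (-t) (by rwa [abs_of_nonpos h] at ht)
    rw [arctan_neg] at this; linarith

theorem aux_half (t : ℝ) (ht : ¬ 1 ≤ |t|) : 1/2 ≤ 1/(1+t^2) := by
  have : t^2 ≤ 1 := by
    rw [← sq_abs]; nlinarith [abs_nonneg t]
  rw [div_le_div_iff₀ (by norm_num) (by positivity)]; linarith

theorem aux_ts (t s : ℝ) :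
    1 ≤ 2 * ((t * arctan t) * (s * arctan s) + (1/(1+t^2) + 1/(1+s^2))) := by
  have a1 := aux_mul_arctan t
  have a2 := aux_mul_arctan s
  have p1 : 0 ≤ 1/(1+t^2) := by positivity
  have p2 : 0 ≤ 1/(1+s^2) := by positivity
  have a3 := mul_nonneg a1 a2
  by_cases ht : 1 ≤ |t|
  · by_cases hs : 1 ≤ |s|
    · nlinarith [aux_mul_arctan_ge t ht, aux_mul_arctan_ge s hs]
    · linarith [aux_half s hs]
  · linarith [aux_half t ht]

theorem aux_mult (m d k lam : ℝ) (hm : 0 < m) (hd : 0 < d) (hk : |k| * d^2 = m) :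
    ∃ φ φ' ψ ψ' : ℝ → ℝ, (∀ y, HasDerivAt φ (φ' y) y) ∧ (∀ y, HasDerivAt ψ (ψ' y) y) ∧
      Continuous φ' ∧ Continuous ψ' ∧
      ∀ y, |φ y| ≤ 4 ∧ d * |φ' y| ≤ 4 ∧ |ψ y| ≤ 4 * d ∧
        m ≤ 2 * (k * (1 - y^2 - lam) * φ y + m * ψ' y) := by
  obtain ⟨r, hr, hr2⟩ : ∃ r : ℝ, 1 - lam ≤ r^2 ∧ (1 - lam = r^2 ∨ r = 0) := by
    rcases le_total 0 (1 - lam) with h | h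
    · exact ⟨√(1-lam), by rw [sq_sqrt h], Or.inl (by rw [sq_sqrt h])⟩
    · exact ⟨0, by simpa using h, Or.inr rfl⟩
  obtain ⟨σ, hσ, hkσ⟩ : ∃ σ : ℝ, |σ| = 1 ∧ k * σ = |k| := by
    rcases le_total 0 k with h | h
    · exact ⟨1, by simp, by rw [abs_of_nonneg h]; ring⟩
    · exact ⟨-1, by simp, by rw [abs_of_nonpos h]; ring⟩
  have ht : ∀ y, HasDerivAt (fun y => arctan ((y - r)/d)) (1/(1+((y-r)/d)^2) * (1/d)) y := by
    intro y
    exact (((hasDerivAt_id y).sub_const r).div_const d).arctan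
  have hs : ∀ y, HasDerivAt (fun y => arctan ((y + r)/d)) (1/(1+((y+r)/d)^2) * (1/d)) y := by
    intro y
    exact (((hasDerivAt_id y).add_const r).div_const d).arctan
  have hpos : ∀ x : ℝ, 1 + x^2 ≠ 0 := fun x => by positivity
  refine ⟨fun y => -σ * (arctan ((y - r)/d) * arctan ((y + r)/d)), _,
    fun y => d * (arctan ((y - r)/d) + arctan ((y + r)/d)), _,
    fun y => ((ht y).mul (hs y)).const_mul (-σ), fun y => ((ht y).add (hs y)).const_mul d,
    ?_, ?_, ?_⟩
  · fun_prop (disch := first | exact fun _ => hpos _ | exact fun _ => hd.ne' | exact hd.ne')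
  · fun_prop (disch := first | exact fun _ => hpos _ | exact fun _ => hd.ne' | exact hd.ne')
  · intro y
    set t := (y - r)/d with htt
    set s := (y + r)/d with hss
    have b1 := aux_arctan_abs t
    have b2 := aux_arctan_abs s
    have c : ∀ x : ℝ, |1/(1+x^2)| ≤ 1 := fun x => by
      rw [abs_of_pos (by positivity), div_le_one (by positivity)]; nlinarith [sq_nonneg x]
    refine ⟨?_, ?_, ?_, ?_⟩
    · rw [abs_mul, abs_neg, hσ, abs_mul, one_mul]
      nlinarith [abs_nonneg (arctan t), abs_nonneg (arctan s)]
    · rw [abs_mul, abs_neg, hσ, one_mul]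
      have : 1/(1+t^2) * (1/d) * arctan s + arctan t * (1/(1+s^2) * (1/d)) =
        (1/(1+t^2) * arctan s + arctan t * (1/(1+s^2))) / d := by ring
      rw [this, abs_div, abs_of_pos hd, mul_div_cancel₀ _ hd.ne']
      refine (abs_add_le _ _).trans ?_
      rw [abs_mul, abs_mul]
      nlinarith [c t, c s, abs_nonneg (1/(1+t^2)), abs_nonneg (1/(1+s^2)), abs_nonneg (arctan t), abs_nonneg (arctan s)]
    · rw [abs_mul, abs_of_pos hd]
      nlinarith [abs_add_le (arctan t) (arctan s)]
    · have h1 : d * (1/(1+t^2) * (1/d) + 1/(1+s^2) * (1/d)) = 1/(1+t^2) + 1/(1+s^2) := by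
        field_simp
      rw [h1]
      have h2 := aux_ts t s
      have h3 : d^2 * (t * s) = y^2 - r^2 := by
        rw [htt, hss]; field_simp; ring
      have h4 : d^2 * ((t * arctan t) * (s * arctan s)) ≤ -(1 - y^2 - lam) * (arctan t * arctan s) := by
        rcases hr2 with h | h
        · have : -(1 - y^2 - lam) = d^2 * (t * s) := by rw [h3]; linarith
          rw [this]; apply le_of_eq; ring
        · have hts : t = s := by rw [htt, hss, h]; simp
          have h5 : d^2 * (t * s) ≤ -(1 - y^2 - lam) := by rw [h3]; linarith
          have := mul_le_mul_of_nonneg_right h5 (mul_self_nonneg (arctan t))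
          rw [← hts] at this ⊢
          linarith
      have h6 : k * (1 - y^2 - lam) * (-σ * (arctan t * arctan s)) =
          |k| * (-(1 - y^2 - lam) * (arctan t * arctan s)) := by rw [← hkσ]; ring
      rw [h6]
      have h7 := mul_le_mul_of_nonneg_left h4 (abs_nonneg k)
      have h8 : |k| * (d^2 * ((t * arctan t) * (s * arctan s))) = m * ((t * arctan t) * (s * arctan s)) := by
        rw [← hk]; ring
      have h9 := mul_le_mul_of_nonneg_left h2 hm.le
      linarith

theorem aux_core (m d ε q k lam : ℝ) (u u1 u2 v v1 v2 f g : ℝ → ℝ) (hm : 0 < m) (hd : 0 < d)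
    (hε0 : 0 ≤ ε) (hε : ε ≤ 1/5000) (hk : |k| * d^2 = m) (hq : 0 ≤ q)
    (hu1 : ∀ y, HasDerivAt u (u1 y) y) (hu2 : ∀ y, HasDerivAt u1 (u2 y) y)
    (hv1 : ∀ y, HasDerivAt v (v1 y) y) (hv2 : ∀ y, HasDerivAt v1 (v2 y) y)
    (cu2 : Continuous u2) (cv2 : Continuous v2)
    (hf : ∀ y, f y = m * d^2 * q * u y - k * (1 - y^2 - lam) * v y - ε * m * u y - m * d^2 * u2 y)
    (hg : ∀ y, g y = m * d^2 * q * v y + k * (1 - y^2 - lam) * u y - ε * m * v y - m * d^2 * v2 y)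
    (bu1 : u 1 = 0) (bu2 : u (-1) = 0) (bv1 : v 1 = 0) (bv2 : v (-1) = 0) :
    m^2 * (∫ y in (-1:ℝ)..1, (u y^2 + v y^2)) ≤ 4000000 * (∫ y in (-1:ℝ)..1, (f y^2 + g y^2)) ∧
    m^2 * (d^2 * ((∫ y in (-1:ℝ)..1, (u1 y^2 + v1 y^2)) + q * (∫ y in (-1:ℝ)..1, (u y^2 + v y^2))))
      ≤ 4000000 * (∫ y in (-1:ℝ)..1, (f y^2 + g y^2)) := by
  obtain ⟨φ, φ', ψ, ψ', hφ, hψ, cφ', cψ', hb⟩ := aux_mult m d k lam hm hd hk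
  have cu : Continuous u := continuous_iff_continuousAt.2 fun y => (hu1 y).continuousAt
  have cv : Continuous v := continuous_iff_continuousAt.2 fun y => (hv1 y).continuousAt
  have cu1 : Continuous u1 := continuous_iff_continuousAt.2 fun y => (hu2 y).continuousAt
  have cv1 : Continuous v1 := continuous_iff_continuousAt.2 fun y => (hv2 y).continuousAt
  have cφ : Continuous φ := continuous_iff_continuousAt.2 fun y => (hφ y).continuousAt
  have cψ : Continuous ψ := continuous_iff_continuousAt.2 fun y => (hψ y).continuousAt
  have cf : Continuous f := by rw [funext hf]; fun_prop
  have cg : Continuous g := by rw [funext hg]; fun_prop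
  set P : ℝ → ℝ := fun y => u y^2 + v y^2 with hP
  set D : ℝ → ℝ := fun y => u1 y^2 + v1 y^2 with hD
  set Q : ℝ → ℝ := fun y => f y^2 + g y^2 with hQ
  set B1 : ℝ → ℝ := fun y => u1 y^2 + v1 y^2 + u y * u2 y + v y * v2 y with hB1
  set B2 : ℝ → ℝ := fun y => φ' y * (v1 y * u y - u1 y * v y) + φ y * (v2 y * u y - u2 y * v y) with hB2
  set B3 : ℝ → ℝ := fun y => ψ' y * (u y^2 + v y^2) + ψ y * (2 * (u y * u1 y + v y * v1 y)) with hB3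
  have cP : Continuous P := by fun_prop
  have cD : Continuous D := by fun_prop
  have cQ : Continuous Q := by fun_prop
  have cB1 : Continuous B1 := by fun_prop
  have cB2 : Continuous B2 := by fun_prop
  have cB3 : Continuous B3 := by fun_prop
  have I1 : ∫ y in (-1:ℝ)..1, B1 y = 0 := by
    apply aux_int (fun y => u y * u1 y + v y * v1 y) B1 _ cB1 (by simp [bu1, bv1]) (by simp [bu2, bv2])
    intro y
    refine (((hu1 y).mul (hu2 y)).add ((hv1 y).mul (hv2 y))).congr_deriv ?_
    simp only [hB1]; ring
  have I2 : ∫ y in (-1:ℝ)..1, B2 y = 0 := by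
    apply aux_int (fun y => φ y * (v1 y * u y - u1 y * v y)) B2 _ cB2 (by simp [bu1, bv1]) (by simp [bu2, bv2])
    intro y
    refine ((hφ y).mul (((hv2 y).mul (hu1 y)).sub ((hu2 y).mul (hv1 y)))).congr_deriv ?_
    simp only [hB2, Pi.mul_apply, Pi.sub_apply]; ring
  have I3 : ∫ y in (-1:ℝ)..1, B3 y = 0 := by
    apply aux_int (fun y => ψ y * (u y * u y + v y * v y)) B3 _ cB3 (by simp [bu1, bv1]) (by simp [bu2, bv2])
    intro y
    refine ((hψ y).mul (((hu1 y).mul (hu1 y)).add ((hv1 y).mul (hv1 y)))).congr_deriv ?_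
    simp only [hB3, Pi.mul_apply, Pi.add_apply]; ring
  have pt := fun y => aux_ptw m d ε q (k * (1 - y^2 - lam)) (φ y) (φ' y) (ψ y) (ψ' y) (u y) (u1 y) (u2 y)
    (v y) (v1 y) (v2 y) (f y) (g y) hm hd hε0 hε (hf y) (hg y) (hb y).1 (hb y).2.1 (hb y).2.2.1 (hb y).2.2.2
  have ii : ∀ (h : ℝ → ℝ), Continuous h → IntervalIntegrable h volume (-1) 1 :=
    fun h hc => hc.intervalIntegrable _ _
  have J1 : d^2 * (∫ y in (-1:ℝ)..1, D y) + d^2 * q * (∫ y in (-1:ℝ)..1, P y) ≤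
      d^2 * (∫ y in (-1:ℝ)..1, B1 y) + (2/5000) * (∫ y in (-1:ℝ)..1, P y)
        + 1250 / m^2 * (∫ y in (-1:ℝ)..1, Q y) := by
    simp only [← intervalIntegral.integral_const_mul]
    rw [← intervalIntegral.integral_add (ii _ (by fun_prop)) (ii _ (by fun_prop)),
      ← intervalIntegral.integral_add (ii _ (by fun_prop)) (ii _ (by fun_prop)),
      ← intervalIntegral.integral_add (ii _ (by fun_prop)) (ii _ (by fun_prop))]
    exact intervalIntegral.integral_mono_on (by norm_num) (ii _ (by fun_prop)) (ii _ (by fun_prop))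
      (fun y _ => (pt y).1)
  have J2 : (∫ y in (-1:ℝ)..1, P y) ≤
      2 * (d^2 * (∫ y in (-1:ℝ)..1, B2 y) + (∫ y in (-1:ℝ)..1, B3 y))
        + 576 * (d^2 * (∫ y in (-1:ℝ)..1, D y)) + (1/2) * (∫ y in (-1:ℝ)..1, P y)
        + 64 / m^2 * (∫ y in (-1:ℝ)..1, Q y) := by
    simp only [← intervalIntegral.integral_const_mul]
    rw [← intervalIntegral.integral_add (ii _ (by fun_prop)) (ii _ (by fun_prop)),
      ← intervalIntegral.integral_const_mul,
      ← intervalIntegral.integral_add (ii _ (by fun_prop)) (ii _ (by fun_prop)),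
      ← intervalIntegral.integral_add (ii _ (by fun_prop)) (ii _ (by fun_prop)),
      ← intervalIntegral.integral_add (ii _ (by fun_prop)) (ii _ (by fun_prop))]
    exact intervalIntegral.integral_mono_on (by norm_num) (ii _ (by fun_prop)) (ii _ (by fun_prop))
      (fun y _ => (pt y).2)
  rw [I1] at J1
  rw [I2, I3] at J2
  have nP : 0 ≤ ∫ y in (-1:ℝ)..1, P y :=
    intervalIntegral.integral_nonneg (by norm_num) (fun y _ => by simp only [hP]; positivity)
  have nD : 0 ≤ ∫ y in (-1:ℝ)..1, D y :=
    intervalIntegral.integral_nonneg (by norm_num) (fun y _ => by simp only [hD]; positivity)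
  have nQ : 0 ≤ ∫ y in (-1:ℝ)..1, Q y :=
    intervalIntegral.integral_nonneg (by norm_num) (fun y _ => by simp only [hQ]; positivity)
  generalize (∫ y in (-1:ℝ)..1, P y) = N at *
  generalize (∫ y in (-1:ℝ)..1, D y) = E at *
  generalize (∫ y in (-1:ℝ)..1, Q y) = R at *
  obtain ⟨T, hT⟩ : ∃ T, R = m^2 * T := ⟨R / m^2, by field_simp⟩
  have e1 : 1250 / m^2 * R = 1250 * T := by rw [hT]; field_simp
  have e2 : 64 / m^2 * R = 64 * T := by rw [hT]; field_simp
  rw [e1] at J1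
  rw [e2] at J2
  have nqP : 0 ≤ d^2 * q * N := by positivity
  have nT : 0 ≤ T := by
    by_contra h
    push Not at h
    have := mul_neg_of_pos_of_neg (by positivity : 0 < m^2) h
    linarith
  have K1 : N ≤ 4000000 * T := by linarith
  have K2 : d^2 * (E + q * N) ≤ 4000000 * T := by linarith
  rw [hT]
  constructor
  · have := mul_le_mul_of_nonneg_left K1 (sq_nonneg m); linarith
  · have := mul_le_mul_of_nonneg_left K2 (sq_nonneg m); linarith

/-- **Resolvent estimate for the Orr–Sommerfeld equation without nonlocal
term, `F₁ ∈ L²`** (Proposition 2.16):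
`ν^{3/4}|k₁|^{1/4}‖(∂_y,|k|)w‖_{L²} + ν^{1/2}|k₁|^{1/2}‖w‖_{L²} ≤ C‖F₁‖_{L²}`. -/
theorem OS_local_resolvent_L2 :
    ∃ ε₀ ν₀ C : ℝ, 0 < ε₀ ∧ ε₀ < 1 ∧ 0 < ν₀ ∧ ν₀ < 1 ∧ 0 < C ∧
      ∀ (ν ε lam : ℝ) (k₁ k₃ : ℤ) (w F₁ : ℝ → ℂ),
        0 < ν → ν ≤ ν₀ → 0 ≤ ε → ε ≤ ε₀ → 1 ≤ |k₁| →
        IntervalIntegrable (fun y => ‖F₁ y‖ ^ 2) MeasureTheory.volume (-1) 1 →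
        OSlocal ν k₁ k₃ lam ε w F₁ →
        ν ^ ((3:ℝ)/4) * |(k₁ : ℝ)| ^ ((1:ℝ)/4) * hk k₁ k₃ w
          + ν ^ ((1:ℝ)/2) * |(k₁ : ℝ)| ^ ((1:ℝ)/2) * l2 w
          ≤ C * l2 F₁ := by
  refine ⟨1/5000, 1/2, 4000, by norm_num, by norm_num, by norm_num, by norm_num, by norm_num, ?_⟩
  intro ν ε lam k₁ k₃ w F₁ hν _ hε0 hε hk1 _ ⟨hw, heq, hw1, hw2⟩
  have hκ : 0 < |(k₁:ℝ)| := by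
    have : (1:ℝ) ≤ |(k₁:ℝ)| := by exact_mod_cast hk1
    linarith
  set κ := |(k₁:ℝ)| with hκd
  set m := ν ^ ((1:ℝ)/2) * κ ^ ((1:ℝ)/2) with hmd
  set d := ν ^ ((1:ℝ)/4) * κ ^ (-(1:ℝ)/4) with hdd
  have hm : 0 < m := by positivity
  have hd : 0 < d := by positivity
  have hd2 : d^2 = ν ^ ((1:ℝ)/2) * κ ^ (-(1:ℝ)/2) := by
    rw [hdd, mul_pow, ← rpow_natCast, ← rpow_natCast, ← rpow_mul hν.le, ← rpow_mul hκ.le]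
    norm_num
  have h1 : κ * d^2 = m := by
    rw [hd2, hmd, mul_left_comm]
    congr 1
    nth_rewrite 1 [← rpow_one κ]
    rw [← rpow_add hκ]; norm_num
  have h2 : m * d^2 = ν := by
    rw [hd2, hmd, mul_mul_mul_comm, ← rpow_add hν, ← rpow_add hκ]; norm_num
  have h3 : ν ^ ((3:ℝ)/4) * κ ^ ((1:ℝ)/4) = m * d := by
    rw [hdd, hmd, mul_mul_mul_comm, ← rpow_add hν, ← rpow_add hκ]; norm_num
  have h4 : √(ν * κ) = m := by
    rw [sqrt_eq_rpow, mul_rpow hν.le hκ.le]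
  rw [h3]
  set q := (kabs k₁ k₃)^2 with hq
  have d1 : ∀ y, HasDerivAt w (deriv w y) y := fun y =>
    (hw.differentiable (by norm_num) y).hasDerivAt
  have hw' : ContDiff ℝ 1 (deriv w) := ((contDiff_succ_iff_deriv (n := 1)).1 hw).2.2
  have d2 : ∀ y, HasDerivAt (deriv w) (deriv (deriv w) y) y := fun y =>
    (hw'.differentiable (by norm_num) y).hasDerivAt
  have c2 : Continuous (deriv (deriv w)) := hw'.continuous_deriv (by norm_num)
  have re : ∀ {z : ℝ → ℂ} {z' : ℂ} {y : ℝ}, HasDerivAt z z' y → HasDerivAt (fun y => (z y).re) z'.re y :=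
    fun h => Complex.reCLM.hasFDerivAt.comp_hasDerivAt _ h
  have im : ∀ {z : ℝ → ℂ} {z' : ℂ} {y : ℝ}, HasDerivAt z z' y → HasDerivAt (fun y => (z y).im) z'.im y :=
    fun h => Complex.imCLM.hasFDerivAt.comp_hasDerivAt _ h
  obtain ⟨A1, A2⟩ := aux_core m d ε q k₁ lam (fun y => (w y).re) (fun y => (deriv w y).re)
    (fun y => (deriv (deriv w) y).re) (fun y => (w y).im) (fun y => (deriv w y).im)
    (fun y => (deriv (deriv w) y).im) _ _ hm hd hε0 hε h1 (sq_nonneg _)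
    (fun y => re (d1 y)) (fun y => re (d2 y)) (fun y => im (d1 y)) (fun y => im (d2 y))
    (Complex.continuous_re.comp c2) (Complex.continuous_im.comp c2) (fun _ => rfl) (fun _ => rfl)
    (by simp [hw2]) (by simp [hw1]) (by simp [hw2]) (by simp [hw1])
  have nsq : ∀ z : ℂ, ‖z‖^2 = z.re^2 + z.im^2 := fun z => by
    rw [Complex.sq_norm, Complex.normSq_apply]; ring
  set R := ∫ y in (-1:ℝ)..1, ‖F₁ y‖^2 with hR
  have eF : R = ∫ y in (-1:ℝ)..1, ((m * d^2 * q * (w y).re - k₁ * (1 - y^2 - lam) * (w y).im - ε * m * (w y).re - m * d^2 * (deriv (deriv w) y).re)^2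
      + (m * d^2 * q * (w y).im + k₁ * (1 - y^2 - lam) * (w y).re - ε * m * (w y).im - m * d^2 * (deriv (deriv w) y).im)^2) := by
    apply intervalIntegral.integral_congr
    intro y hy
    rw [Set.uIcc_of_le (by norm_num)] at hy
    have hF := heq y hy
    rw [h4] at hF
    have hV : (1 - (y:ℂ)^2 - (lam:ℂ)) = ((1 - y^2 - lam : ℝ) : ℂ) := by push_cast; ring
    have hK : ((kabs k₁ k₃ : ℝ) : ℂ)^2 = ((q : ℝ) : ℂ) := by rw [hq]; push_cast; ring
    have hk' : (k₁ : ℂ) = ((k₁ : ℝ) : ℂ) := by push_cast; ring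
    rw [hV, hK, hk'] at hF
    have hre := congrArg Complex.re hF
    have him := congrArg Complex.im hF
    simp only [Complex.add_re, Complex.sub_re, Complex.mul_re, Complex.neg_re, Complex.ofReal_re,
      Complex.ofReal_im, Complex.I_re, Complex.I_im, Complex.add_im, Complex.sub_im, Complex.mul_im,
      Complex.neg_im] at hre him
    simp only [nsq]
    rw [← hre, ← him, h2]
    ring
  rw [← eF] at A1 A2
  have nR : 0 ≤ R := intervalIntegral.integral_nonneg (by norm_num) (fun y _ => by positivity)
  have fin : ∀ c X : ℝ, 0 ≤ c → c^2 * X ≤ 4000000 * R → c * √X ≤ 2000 * √R := by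
    intro c X hc h
    have e1 : c * √X = √(c^2 * X) := by rw [sqrt_mul (sq_nonneg c), sqrt_sq hc]
    have e2 : 2000 * √R = √(4000000 * R) := by
      rw [sqrt_mul (by norm_num), show (4000000:ℝ) = 2000^2 by norm_num, sqrt_sq (by norm_num)]
    rw [e1, e2]; exact sqrt_le_sqrt h
  have g1 : m * l2 w ≤ 2000 * √R := by
    unfold l2; apply fin _ _ hm.le; simp only [nsq]; exact A1
  have g2 : m * d * hk k₁ k₃ w ≤ 2000 * √R := by
    unfold hk; apply fin _ _ (by positivity); simp only [nsq]; rw [mul_pow, mul_assoc]; exact A2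
  have : l2 F₁ = √R := rfl
  rw [this]
  linarith

end
end

section
/- There exist constants ε₀, ν₀ ∈ (0,1) and C > 0, independent of ν, k, λ and ε, such that for every 0 < ν ≤ ν₀, every 0 < ε ≤ ε₀, every k = (k₁,k₃) ∈ ℤ² with |k₁| ≥ 1, every λ ∈ ℝ, every F₁ ∈ L²(I), and every solution w ∈ H¹₀(I) ∩ H²(I) of −ν(∂_y² − |k|²)w + i k₁(1−y²−λ)w − ε(ν|k₁|)^{1/2} w = F₁ on I with w(±1) = 0, one has ν ‖(∂_y,|k|)w‖_{L²} + ν^{3/4}|k₁|^{1/4} ‖w‖_{L²} ≤ C ‖F₁‖_{H⁻¹_k}. -/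
open Real MeasureTheory

noncomputable section

lemma os_ident (ν lam s K : ℝ) (k₁ : ℤ) (w F : ℝ → ℂ) (χ : ℝ → ℝ) (hw : ContDiff ℝ 2 w)
    (hχ : ContDiff ℝ 1 χ)
    (heq : ∀ y ∈ Set.Icc (-1:ℝ) 1,
      -(ν : ℂ) * (deriv (deriv w) y - (K : ℂ) ^ 2 * w y) +
      Complex.I * (k₁ : ℂ) * ((1 - (y : ℂ) ^ 2 - (lam : ℂ)) * w y) - (s : ℂ) * w y = F y)
    (h1 : w (-1) = 0) (h2 : w 1 = 0) :
    ∫ y in (-1:ℝ)..1, F y * (starRingEnd ℂ) ((χ y : ℂ) * w y) =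
      (ν : ℂ) * ((∫ y in (-1:ℝ)..1, χ y * ‖deriv w y‖ ^ 2 : ℝ) : ℂ)
      + (ν * K ^ 2 - s : ℂ) * ((∫ y in (-1:ℝ)..1, χ y * ‖w y‖ ^ 2 : ℝ) : ℂ)
      + Complex.I * (k₁ : ℂ) * ((∫ y in (-1:ℝ)..1, (1 - y ^ 2 - lam) * χ y * ‖w y‖ ^ 2 : ℝ) : ℂ)
      + (ν : ℂ) * ∫ y in (-1:ℝ)..1, ((deriv χ y : ℝ) : ℂ) * (deriv w y * (starRingEnd ℂ) (w y)) := by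
  have hw1 : ContDiff ℝ 1 (deriv w) := (contDiff_succ_iff_deriv (n := 1)).1 hw |>.2.2
  have cw : Continuous w := hw.continuous
  have cw' : Continuous (deriv w) := hw1.continuous
  have cw'' : Continuous (deriv (deriv w)) := hw1.continuous_deriv le_rfl
  have cχ : Continuous χ := hχ.continuous
  have cχ' : Continuous (deriv χ) := hχ.continuous_deriv le_rfl
  have hdw : ∀ y, HasDerivAt w (deriv w y) y := fun y =>
    (hw.differentiable (by norm_num) y).hasDerivAt
  have hdw1 : ∀ y, HasDerivAt (deriv w) (deriv (deriv w) y) y := fun y =>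
    (hw1.differentiable (by norm_num) y).hasDerivAt
  have hdχ : ∀ y, HasDerivAt χ (deriv χ y) y := fun y =>
    (hχ.differentiable (by norm_num) y).hasDerivAt
  have hd : ∀ y, HasDerivAt (fun y => deriv w y * ((χ y : ℂ) * (starRingEnd ℂ) (w y)))
      (deriv (deriv w) y * ((χ y : ℂ) * (starRingEnd ℂ) (w y)) +
        deriv w y * (((deriv χ y : ℝ) : ℂ) * (starRingEnd ℂ) (w y) +
          (χ y : ℂ) * (starRingEnd ℂ) (deriv w y))) y := fun y => by
    have e1 : HasDerivAt (fun y => (starRingEnd ℂ) (w y)) ((starRingEnd ℂ) (deriv w y)) y := by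
      simpa using (hdw y).star
    exact (hdw1 y).mul ((hdχ y).ofReal_comp.mul e1)
  have cs : Continuous (starRingEnd ℂ) := Complex.continuous_conj
  have hint := intervalIntegral.integral_eq_sub_of_hasDerivAt (a := -1) (b := 1)
    (fun y _ => hd y) (Continuous.intervalIntegrable (by fun_prop) _ _)
  simp only [h1, h2, map_zero, mul_zero, sub_zero] at hint
  rw [← intervalIntegral.integral_ofReal, ← intervalIntegral.integral_ofReal,
    ← intervalIntegral.integral_ofReal, ← intervalIntegral.integral_const_mul,
    ← intervalIntegral.integral_const_mul, ← intervalIntegral.integral_const_mul,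
    ← intervalIntegral.integral_const_mul,
    ← intervalIntegral.integral_add, ← intervalIntegral.integral_add,
    ← intervalIntegral.integral_add]
  · rw [← sub_zero (∫ y in (-1:ℝ)..1, F y * (starRingEnd ℂ) ((χ y : ℂ) * w y)),
      ← mul_zero (-(ν:ℂ)), ← hint, ← intervalIntegral.integral_const_mul, sub_eq_iff_eq_add,
      ← intervalIntegral.integral_add]
    · apply intervalIntegral.integral_congr
      intro y hy
      rw [Set.uIcc_of_le (by norm_num)] at hy
      simp only [← heq y hy, map_mul, Complex.conj_ofReal]
      push_cast
      rw [← Complex.mul_conj', ← Complex.mul_conj']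
      ring
    all_goals exact Continuous.intervalIntegrable (by fun_prop) _ _
  all_goals exact Continuous.intervalIntegrable (by fun_prop) _ _

lemma os_dual (k₁ k₃ : ℤ) (hk1 : 1 ≤ kabs k₁ k₃) (F : ℝ → ℂ) (B : ℝ)
    (hB : ∀ y ∈ Set.Icc (-1:ℝ) 1, ‖F y‖ ≤ B) (g : ℝ → ℂ) (hg : ContDiff ℝ 1 g)
    (h1 : g (-1) = 0) (h2 : g 1 = 0) (t : ℝ) (ht : 0 < t) (hgt : hk k₁ k₃ g ≤ t) :
    ‖∫ y in (-1:ℝ)..1, F y * (starRingEnd ℂ) (g y)‖ ≤ hm1 k₁ k₃ F * t := by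
  have hB0 : 0 ≤ B := (norm_nonneg _).trans (hB 0 (by simp))
  have hbdd : BddAbove { r : ℝ | ∃ g : ℝ → ℂ, ContDiff ℝ 1 g ∧ g (-1) = 0 ∧ g 1 = 0 ∧
      hk k₁ k₃ g ≤ 1 ∧ r = ‖∫ y in (-1:ℝ)..1, F y * (starRingEnd ℂ) (g y)‖ } := by
    refine ⟨B * 3, ?_⟩
    rintro r ⟨g, hg, -, -, hg1, rfl⟩
    have cg := hg.continuous
    have hA : ∫ y in (-1:ℝ)..1, ‖g y‖ ^ 2 ≤ 1 := by
      unfold hk at hg1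
      rw [Real.sqrt_le_left zero_le_one, one_pow] at hg1
      have e1 : 0 ≤ ∫ y in (-1:ℝ)..1, ‖deriv g y‖ ^ 2 :=
        intervalIntegral.integral_nonneg (by norm_num) (fun _ _ => by positivity)
      have e2 : 0 ≤ ∫ y in (-1:ℝ)..1, ‖g y‖ ^ 2 :=
        intervalIntegral.integral_nonneg (by norm_num) (fun _ _ => by positivity)
      nlinarith [mul_nonneg (by nlinarith : 0 ≤ kabs k₁ k₃ ^ 2 - 1) e2]
    have ci : IntervalIntegrable (fun y => B * (1 + ‖g y‖ ^ 2)) volume (-1) 1 :=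
      Continuous.intervalIntegrable (by fun_prop) _ _
    refine (intervalIntegral.norm_integral_le_of_norm_le (g := fun y => B * (1 + ‖g y‖ ^ 2))
      (by norm_num) ?_ ci).trans ?_
    · refine Filter.Eventually.of_forall fun y hy => ?_
      have := hB y ⟨hy.1.le, hy.2⟩
      rw [norm_mul, RCLike.norm_conj]
      gcongr
      nlinarith [sq_nonneg (‖g y‖ - 1), norm_nonneg (g y)]
    · rw [intervalIntegral.integral_const_mul, intervalIntegral.integral_add (by simp)
        (Continuous.intervalIntegrable (by fun_prop) _ _)]
      gcongr
      simp
      linarith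
  have hmem : ‖∫ y in (-1:ℝ)..1, F y * (starRingEnd ℂ) ((t⁻¹:ℝ) * g y)‖ ≤ hm1 k₁ k₃ F := by
    refine le_csSup hbdd ⟨fun y => (t⁻¹:ℝ) * g y, contDiff_const.mul hg, by simp [h1],
      by simp [h2], ?_, rfl⟩
    have hdd : ∀ y, deriv (fun y => ((t⁻¹:ℝ):ℂ) * g y) y = (t⁻¹:ℝ) * deriv g y := fun y =>
      deriv_const_mul_field _
    unfold hk at hgt ⊢
    rw [Real.sqrt_le_left ht.le] at hgt
    rw [Real.sqrt_le_left zero_le_one, one_pow]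
    simp only [hdd, norm_mul, mul_pow, intervalIntegral.integral_const_mul, Complex.norm_real,
      Real.norm_eq_abs, sq_abs]
    have : (t⁻¹)^2 * t^2 = 1 := by field_simp
    nlinarith [mul_le_mul_of_nonneg_left hgt (sq_nonneg t⁻¹)]
  have : ∫ y in (-1:ℝ)..1, F y * (starRingEnd ℂ) ((t⁻¹:ℝ) * g y) =
      (t⁻¹ : ℝ) * ∫ y in (-1:ℝ)..1, F y * (starRingEnd ℂ) (g y) := by
    rw [← intervalIntegral.integral_const_mul]
    congr 1; ext y
    simp; ring
  rw [this, norm_mul, Complex.norm_real, Real.norm_eq_abs, abs_of_pos (by positivity),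
    inv_mul_le_iff₀ ht] at hmem
  linarith

def chi (c δ y : ℝ) : ℝ := (c - y ^ 2) / √((c - y ^ 2) ^ 2 + δ ^ 2 * (y ^ 2 + δ ^ 2))

lemma chi_D_pos (c δ y : ℝ) (hδ : 0 < δ) : 0 < (c - y ^ 2) ^ 2 + δ ^ 2 * (y ^ 2 + δ ^ 2) := by
  positivity

lemma chi_contDiff (c δ : ℝ) (hδ : 0 < δ) : ContDiff ℝ 1 (chi c δ) := by
  unfold chi
  refine ContDiff.div (by fun_prop) (ContDiff.sqrt (by fun_prop) fun y => ?_) fun y => ?_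
  · exact (chi_D_pos c δ y hδ).ne'
  · exact (Real.sqrt_pos.2 (chi_D_pos c δ y hδ)).ne'

lemma chi_abs (c δ y : ℝ) (hδ : 0 < δ) : |chi c δ y| ≤ 1 := by
  have hD := chi_D_pos c δ y hδ
  unfold chi
  rw [abs_div, abs_of_pos (Real.sqrt_pos.2 hD), div_le_one (Real.sqrt_pos.2 hD)]
  apply Real.abs_le_sqrt
  have : 0 ≤ δ ^ 2 * (y ^ 2 + δ ^ 2) := by positivity
  linarith

lemma chi_deriv (c δ y : ℝ) (hδ : 0 < δ) : |deriv (chi c δ) y| ≤ 3 / δ := by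
  have hD := chi_D_pos c δ y hδ
  have hS := Real.sqrt_pos.2 hD
  have hSS := Real.sq_sqrt hD.le
  have hd : HasDerivAt (chi c δ) ((-(2 * y) * √((c - y ^ 2) ^ 2 + δ ^ 2 * (y ^ 2 + δ ^ 2)) -
      (c - y ^ 2) * ((2 * (c - y^2) * (-(2*y)) + δ ^ 2 * (2 * y)) /
        (2 * √((c - y ^ 2) ^ 2 + δ ^ 2 * (y ^ 2 + δ ^ 2))))) /
        (√((c - y ^ 2) ^ 2 + δ ^ 2 * (y ^ 2 + δ ^ 2))) ^ 2) y := by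
    have hu : HasDerivAt (fun y : ℝ => c - y ^ 2) (-(2 * y)) y := by
      simpa using (hasDerivAt_pow 2 y).const_sub c
    have hDd : HasDerivAt (fun y : ℝ => (c - y ^ 2) ^ 2 + δ ^ 2 * (y ^ 2 + δ ^ 2))
        (2 * (c - y^2) * (-(2*y)) + δ ^ 2 * (2 * y)) y := by
      have h2 : HasDerivAt (fun y : ℝ => y ^ 2 + δ ^ 2) (2 * y) y := by
        simpa using (hasDerivAt_pow 2 y).add_const (δ ^ 2)
      refine ((hu.pow 2).add (h2.const_mul (δ ^ 2))).congr_deriv ?_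
      norm_num
    exact hu.div (hDd.sqrt hD.ne') hS.ne'
  rw [hd.deriv]
  set S := √((c - y ^ 2) ^ 2 + δ ^ 2 * (y ^ 2 + δ ^ 2)) with hSdef
  have hN : (-(2 * y) * S - (c - y ^ 2) * ((2 * (c - y^2) * (-(2*y)) + δ ^ 2 * (2 * y)) /
        (2 * S))) / S ^ 2 = -(2 * y * (δ ^ 2 * (y ^ 2 + δ ^ 2)) + (c - y^2) * (δ ^ 2 * y)) / S ^ 3 := by
    field_simp
    rw [hSS]; ring
  rw [hN, abs_div, abs_neg, abs_of_pos (pow_pos hS 3), div_le_div_iff₀ (by positivity) hδ]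
  have a1 : |c - y ^ 2| ≤ S := Real.abs_le_sqrt (by
    have : 0 ≤ δ ^ 2 * (y ^ 2 + δ ^ 2) := by positivity
    linarith)
  have a2 : δ * |y| ≤ S := by
    rw [← abs_of_pos hδ, ← abs_mul]
    exact Real.abs_le_sqrt (by nlinarith [sq_nonneg (c - y^2), sq_nonneg (δ^2)])
  have a3 : δ ^ 2 ≤ S := by
    apply Real.le_sqrt_of_sq_le
    nlinarith [sq_nonneg (c - y^2), sq_nonneg (δ * y)]
  have a4 : δ ^ 2 * (y ^ 2 + δ ^ 2) ≤ S ^ 2 := by rw [hSS]; nlinarith [sq_nonneg (c - y^2)]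
  have b1 : |2 * y * (δ ^ 2 * (y ^ 2 + δ ^ 2))| * δ ≤ 2 * S * S ^ 2 := by
    rw [abs_mul, abs_mul, abs_of_pos (by positivity : 0 < δ ^ 2 * (y ^ 2 + δ ^ 2)), abs_two]
    calc 2 * |y| * (δ ^ 2 * (y ^ 2 + δ ^ 2)) * δ = 2 * (δ * |y|) * (δ ^ 2 * (y ^ 2 + δ ^ 2)) := by ring
      _ ≤ _ := by gcongr
  have b2 : |(c - y^2) * (δ ^ 2 * y)| * δ ≤ S * (S * S) := by
    rw [abs_mul, abs_mul, abs_of_pos (by positivity : 0 < δ ^ 2)]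
    calc |c - y ^ 2| * (δ ^ 2 * |y|) * δ = |c - y ^ 2| * (δ ^ 2 * (δ * |y|)) := by ring
      _ ≤ _ := by gcongr
  have := abs_add_le (2 * y * (δ ^ 2 * (y ^ 2 + δ ^ 2))) ((c - y^2) * (δ ^ 2 * y))
  nlinarith

/-- the bump weight -/
def bump (δ a y : ℝ) : ℝ := 2 / (1 + ((y - a) / δ) ^ 2)

lemma bump_nonneg (δ a y : ℝ) : 0 ≤ bump δ a y := by unfold bump; positivity

lemma bump_ge (δ a y : ℝ) (hδ : 0 < δ) (h : |y - a| ≤ δ) : 1 ≤ bump δ a y := by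
  unfold bump
  rw [le_div_iff₀ (by positivity)]
  have : ((y - a) / δ) ^ 2 ≤ 1 := by
    rw [sq_le_one_iff_abs_le_one, abs_div, abs_of_pos hδ, div_le_one hδ]; exact h
  linarith

lemma chi_lower (c δ y : ℝ) (hδ : 0 < δ) :
    1 ≤ 2 / δ ^ 2 * ((c - y ^ 2) * chi c δ y) + (bump δ 0 y + bump δ (√c) y + bump δ (-√c) y) := by
  have hD := chi_D_pos c δ y hδ
  have hS := Real.sqrt_pos.2 hD
  have n0 := bump_nonneg δ 0 y
  have n1 := bump_nonneg δ (√c) y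
  have n2 := bump_nonneg δ (-√c) y
  have hP : 0 ≤ 2 / δ ^ 2 * ((c - y ^ 2) * chi c δ y) := by
    have : (c - y ^ 2) * chi c δ y = (c - y^2)^2 / √((c - y ^ 2) ^ 2 + δ ^ 2 * (y ^ 2 + δ ^ 2)) := by
      unfold chi; ring
    rw [this]; positivity
  by_cases hy : |y| ≤ δ
  · have := bump_ge δ 0 y hδ (by simpa using hy)
    linarith
  push Not at hy
  by_cases hE : δ * |y| ≤ |c - y ^ 2|
  · have hu : δ ^ 2 ≤ |c - y^2| := by nlinarith
    have hu0 : 0 < |c - y^2| := by nlinarith [pow_pos hδ 2]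
    have hS2 : √((c - y ^ 2) ^ 2 + δ ^ 2 * (y ^ 2 + δ ^ 2)) ≤ 2 * |c - y^2| := by
      rw [Real.sqrt_le_left (by positivity), mul_pow, sq_abs]
      have e1 : (δ * |y|)^2 ≤ (c - y^2)^2 := by rw [← sq_abs (c - y^2)]; gcongr
      have e2 : (δ^2)^2 ≤ (c - y^2)^2 := by rw [← sq_abs (c - y^2)]; gcongr
      rw [mul_pow, sq_abs] at e1
      nlinarith
    have : δ^2 / 2 ≤ (c - y ^ 2) * chi c δ y := by
      have e : (c - y ^ 2) * chi c δ y
          = |c - y^2|^2 / √((c - y ^ 2) ^ 2 + δ ^ 2 * (y ^ 2 + δ ^ 2)) := by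
        unfold chi; rw [sq_abs]; ring
      rw [e, le_div_iff₀ hS]
      nlinarith
    have : 1 ≤ 2 / δ ^ 2 * ((c - y ^ 2) * chi c δ y) := by
      rw [div_mul_eq_mul_div, le_div_iff₀ (by positivity)]; linarith
    linarith
  · push Not at hE
    have hc : 0 ≤ c := by
      by_contra hc
      push Not at hc
      have : |c - y^2| = y^2 - c := by rw [abs_of_neg] <;> nlinarith
      nlinarith [sq_abs y]
    have hs := Real.sqrt_nonneg c
    have hss := Real.sq_sqrt hc
    have key : |(|y| - √c)| ≤ δ := by
      have e : |c - y^2| = |(|y| - √c)| * (|y| + √c) := by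
        have e0 : |(|y| + √c)| = |y| + √c := abs_of_nonneg (by positivity)
        rw [← e0, ← abs_mul, ← abs_neg]
        congr 1
        nlinarith [sq_abs y]
      rw [e] at hE
      by_contra hh
      push Not at hh
      nlinarith [abs_nonneg (|y| - √c)]
    rcases le_total 0 y with h | h
    · rw [abs_of_nonneg h] at key
      have := bump_ge δ _ y hδ key
      linarith
    · rw [abs_of_nonpos h] at key
      have := bump_ge δ (-√c) y hδ (by rw [← abs_neg]; convert key using 2; ring)
      linarith

lemma bump_cont (δ a : ℝ) : Continuous (bump δ a) := by
  unfold bump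
  exact continuous_const.div (by fun_prop) fun y => by positivity

lemma bump_int (δ a : ℝ) (hδ : 0 < δ) (w : ℝ → ℂ) (hw : ContDiff ℝ 2 w)
    (h1 : w (-1) = 0) (h2 : w 1 = 0) :
    ∫ y in (-1:ℝ)..1, bump δ a y * ‖w y‖ ^ 2 ≤
      7 * δ * ∫ y in (-1:ℝ)..1, ‖w y‖ * ‖deriv w y‖ := by
  have cw : Continuous w := hw.continuous
  have cw' : Continuous (deriv w) := hw.continuous_deriv (by norm_num)
  have hdw : ∀ y, HasDerivAt w (deriv w y) y := fun y =>
    (hw.differentiable (by norm_num) y).hasDerivAt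
  have cb := bump_cont δ a
  have hd : ∀ y, HasDerivAt (fun y => 2 * δ * Real.arctan ((y - a) / δ) * ‖w y‖ ^ 2)
      (bump δ a y * ‖w y‖ ^ 2 +
        2 * δ * Real.arctan ((y - a) / δ) * (2 * inner ℝ (w y) (deriv w y))) y := fun y => by
    have e1 : HasDerivAt (fun y => 2 * δ * Real.arctan ((y - a) / δ)) (bump δ a y) y := by
      have := ((((hasDerivAt_id y).sub_const a).div_const δ).arctan).const_mul (2 * δ)
      refine this.congr_deriv ?_
      unfold bump
      simp only [id]
      field_simp
    exact e1.mul (hdw y).norm_sq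
  have ci : Continuous fun y => 2 * δ * Real.arctan ((y - a) / δ) * (2 * inner ℝ (w y) (deriv w y)) := by
    have : Continuous fun y => inner ℝ (w y) (deriv w y) := cw.inner cw'
    have : Continuous fun y => Real.arctan ((y - a) / δ) :=
      Real.continuous_arctan.comp (by fun_prop)
    fun_prop
  have hint := intervalIntegral.integral_eq_sub_of_hasDerivAt (a := -1) (b := 1)
    (fun y _ => hd y) (Continuous.intervalIntegrable (by fun_prop) _ _)
  rw [intervalIntegral.integral_add (Continuous.intervalIntegrable (by fun_prop) _ _)
    (ci.intervalIntegrable _ _)] at hint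
  simp only [h1, h2, norm_zero] at hint
  have hb : -(∫ y in (-1:ℝ)..1, 2 * δ * Real.arctan ((y - a) / δ) * (2 * inner ℝ (w y) (deriv w y)))
      ≤ ∫ y in (-1:ℝ)..1, 7 * δ * (‖w y‖ * ‖deriv w y‖) := by
    rw [← intervalIntegral.integral_neg]
    apply intervalIntegral.integral_mono_on (by norm_num) (ci.neg.intervalIntegrable _ _)
      (Continuous.intervalIntegrable (by fun_prop) _ _)
    intro y _
    refine (neg_le_abs _).trans ?_
    rw [abs_mul, abs_mul, abs_of_pos (by positivity : 0 < 2 * δ), abs_mul, abs_two]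
    have e1 := abs_real_inner_le_norm (w y) (deriv w y)
    have e2 : |Real.arctan ((y - a) / δ)| ≤ 7 / 4 := by
      rw [abs_le]
      constructor <;> linarith [Real.arctan_lt_pi_div_two ((y-a)/δ), Real.neg_pi_div_two_lt_arctan ((y-a)/δ), Real.pi_lt_d2]
    calc 2 * δ * |Real.arctan ((y - a) / δ)| * (2 * |inner ℝ (w y) (deriv w y)|)
        ≤ 2 * δ * (7 / 4) * (2 * (‖w y‖ * ‖deriv w y‖)) := by gcongr
      _ = _ := by ring
  rw [intervalIntegral.integral_const_mul] at hb
  have z : ∀ x z : ℝ, x * 0 ^ 2 - z * 0 ^ 2 = 0 := fun x z => by ring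
  rw [z] at hint
  linarith

lemma os_algebra (ε N h m Q A X : ℝ) (hε : ε ≤ 1/6000) (hN : 0 ≤ N) (hh : 0 ≤ h)
    (hm : 0 ≤ m) (hA : A = N ^ 2)
    (e1 : h ^ 2 ≤ ε * A + m * h)
    (e2 : Q ≤ m * (2 * h + 5 * N) + 3 * X)
    (e3 : A ≤ 2 * Q + 21 * X)
    (e4 : 27 * X ≤ A / 4 + 729 * h ^ 2) : h + N ≤ 100 * m := by
  subst hA
  have f1 : h ^ 2 ≤ 2 * (1/6000 * N ^ 2) + m ^ 2 := by
    nlinarith [sq_nonneg (h - m), mul_le_mul_of_nonneg_right hε (sq_nonneg N)]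
  have f2 : N ^ 2 ≤ 204 * m ^ 2 + 1462 * h ^ 2 := by
    nlinarith [sq_nonneg (h - m), sq_nonneg (N / 2 - 10 * m)]
  have f3 : N ^ 2 ≤ (60 * m) ^ 2 := by nlinarith
  have f4 : N ≤ 60 * m := abs_le_of_sq_le_sq' f3 (by positivity) |>.2
  have f5 : h ≤ 2 * m := abs_le_of_sq_le_sq' (by nlinarith) (by positivity) |>.2
  linarith

set_option maxHeartbeats 2000000 in
lemma os_main (a δ ε lam : ℝ) (k₁ k₃ : ℤ) (w F : ℝ → ℂ) (ha : a = |(k₁ : ℝ)|) (ha1 : 1 ≤ a)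
    (hδ : 0 < δ) (hε : ε ≤ 1/6000) (hw : ContDiff ℝ 2 w)
    (heq : ∀ y ∈ Set.Icc (-1:ℝ) 1,
      -((a * δ ^ 4 : ℝ) : ℂ) * (deriv (deriv w) y - (kabs k₁ k₃ : ℂ) ^ 2 * w y) +
      Complex.I * (k₁ : ℂ) * ((1 - (y : ℂ) ^ 2 - (lam : ℂ)) * w y)
        - ((ε * (a * δ ^ 2) : ℝ) : ℂ) * w y = F y)
    (h1 : w (-1) = 0) (h2 : w 1 = 0) :
    a * δ ^ 4 * hk k₁ k₃ w + a * δ ^ 3 * l2 w ≤ 100 * hm1 k₁ k₃ F := by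
  have cw : Continuous w := hw.continuous
  have hw1 : ContDiff ℝ 1 (deriv w) := (contDiff_succ_iff_deriv (n := 1)).1 hw |>.2.2
  have cw' : Continuous (deriv w) := hw1.continuous
  have cw'' : Continuous (deriv (deriv w)) := hw1.continuous_deriv le_rfl
  have hk1 : 1 ≤ kabs k₁ k₃ := by
    unfold kabs
    apply Real.le_sqrt_of_sq_le
    rw [← sq_abs (k₁:ℝ), ← ha]
    nlinarith [sq_nonneg (k₃:ℝ)]
  obtain ⟨B, hB⟩ : ∃ B, ∀ y ∈ Set.Icc (-1:ℝ) 1, ‖F y‖ ≤ B := by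
    refine isCompact_Icc.exists_bound_of_continuousOn (ContinuousOn.congr (f := _)
      (Continuous.continuousOn ?_) fun y hy => (heq y hy).symm)
    fun_prop
  have hdual := os_dual k₁ k₃ hk1 F B hB
  set M := hm1 k₁ k₃ F with hMdef
  have hM : 0 ≤ M := by
    have := hdual (fun _ => 0) contDiff_const rfl rfl 1 one_pos (by simp [hk])
    simpa using this
  set A := ∫ y in (-1:ℝ)..1, ‖w y‖ ^ 2 with hAdef
  set E := ∫ y in (-1:ℝ)..1, ‖deriv w y‖ ^ 2 with hEdef
  set X := ∫ y in (-1:ℝ)..1, ‖w y‖ * ‖deriv w y‖ with hXdef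
  have hA0 : 0 ≤ A := intervalIntegral.integral_nonneg (by norm_num) (fun _ _ => by positivity)
  have hE0 : 0 ≤ E := intervalIntegral.integral_nonneg (by norm_num) (fun _ _ => by positivity)
  have hH2 : hk k₁ k₃ w ^ 2 = E + kabs k₁ k₃ ^ 2 * A := Real.sq_sqrt (by positivity)
  have hN2 : l2 w ^ 2 = A := Real.sq_sqrt hA0
  have hH0 : 0 ≤ hk k₁ k₃ w := Real.sqrt_nonneg _
  have hN0 : 0 ≤ l2 w := Real.sqrt_nonneg _
  set H := hk k₁ k₃ w with hHdef
  set N := l2 w with hNdef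
  set χ := chi (1 - lam) δ with hχdef
  have hχ : ContDiff ℝ 1 χ := chi_contDiff _ _ hδ
  have cχ : Continuous χ := hχ.continuous
  have cχ' : Continuous (deriv χ) := hχ.continuous_deriv le_rfl
  set P := ∫ y in (-1:ℝ)..1, (1 - y ^ 2 - lam) * χ y * ‖w y‖ ^ 2 with hPdef
  have ha0 : 0 < a := by linarith
  -- step 1
  have s1 : a * δ ^ 4 * H ^ 2 ≤ ε * (a * δ ^ 2) * A + M * H := by
    have hid := os_ident (a * δ ^ 4) lam (ε * (a * δ ^ 2)) (kabs k₁ k₃) k₁ w F (fun _ => 1) hw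
      contDiff_const heq h1 h2
    simp only [one_mul, deriv_const, Complex.ofReal_one, Complex.ofReal_zero, zero_mul,
      intervalIntegral.integral_zero, mul_zero, add_zero, ← hAdef, ← hEdef] at hid
    have hre := congrArg Complex.re hid
    have : (∫ y in (-1:ℝ)..1, F y * (starRingEnd ℂ) (w y)).re ≤ M * H := by
      refine (Complex.re_le_norm _).trans ?_
      refine le_of_forall_pos_le_add fun η hη => ?_
      have := hdual w (hw.of_le (by norm_num)) h1 h2 (H + η / (M + 1)) (by positivity)
        (by simp only [← hHdef]; linarith [show 0 < η / (M+1) by positivity])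
      have e : M * (η / (M + 1)) ≤ η := by
        rw [mul_div_assoc', div_le_iff₀ (by positivity)]; nlinarith
      nlinarith
    rw [hre] at this
    rw [hH2]
    simp [← Complex.ofReal_pow, -Complex.ofReal_mul] at this
    norm_cast at this
    nlinarith
  -- step 2
  have s2 : a * P ≤ M * (2 * H + 5 * N / δ) + a * δ ^ 4 * (3 / δ * X) := by
    rcases (by positivity : 0 ≤ 2 * H + 5 * N / δ).eq_or_lt with h0 | h0
    · have : N = 0 := by
        have : 0 ≤ 5 * N / δ := by positivity
        have : 5 * N / δ = 0 := by linarith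
        field_simp at this; linarith
      have hA' : A = 0 := by rw [← hN2, this]; norm_num
      have hP0 : P ≤ (1 + |lam| + 1) * A := by
        rw [hAdef, ← intervalIntegral.integral_const_mul]
        apply intervalIntegral.integral_mono_on (by norm_num)
          (Continuous.intervalIntegrable (by fun_prop) _ _)
          (Continuous.intervalIntegrable (by fun_prop) _ _)
        intro y hy
        gcongr
        refine (le_abs_self _).trans ?_
        rw [abs_mul]
        have := chi_abs (1 - lam) δ y hδ
        have e : |1 - y^2 - lam| ≤ 1 + |lam| + 1 := by
          rw [abs_le]
          constructor <;> nlinarith [hy.1, hy.2, neg_abs_le lam, le_abs_self lam]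
        calc _ ≤ (1 + |lam| + 1) * 1 := by gcongr
          _ = _ := by ring
      have hX0 : 0 ≤ X := intervalIntegral.integral_nonneg (by norm_num) (fun _ _ => by positivity)
      rw [hA', mul_zero] at hP0
      rw [← h0]
      have : 0 ≤ a * δ ^ 4 * (3 / δ * X) := by positivity
      nlinarith
    have hid := os_ident (a * δ ^ 4) lam (ε * (a * δ ^ 2)) (kabs k₁ k₃) k₁ w F χ hw
      hχ heq h1 h2
    have hg : ContDiff ℝ 1 fun y => (χ y : ℂ) * w y :=
      (Complex.ofRealCLM.contDiff.comp hχ).mul (hw.of_le (by norm_num))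
    have hgk : hk k₁ k₃ (fun y => (χ y : ℂ) * w y) ≤ 2 * H + 5 * N / δ := by
      unfold hk
      rw [Real.sqrt_le_left h0.le]
      have i1 : ∫ y in (-1:ℝ)..1, ‖(χ y : ℂ) * w y‖ ^ 2 ≤ A := by
        apply intervalIntegral.integral_mono_on (by norm_num)
          (Continuous.intervalIntegrable (by fun_prop) _ _)
          (Continuous.intervalIntegrable (by fun_prop) _ _)
        intro y _
        have := chi_abs (1 - lam) δ y hδ
        rw [norm_mul, Complex.norm_real, Real.norm_eq_abs]
        gcongr
        exact mul_le_of_le_one_left (norm_nonneg _) this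
      have i2 : ∫ y in (-1:ℝ)..1, ‖deriv (fun y => (χ y : ℂ) * w y) y‖ ^ 2 ≤
          2 * E + 18 / δ ^ 2 * A := by
        rw [hEdef, hAdef, ← intervalIntegral.integral_const_mul,
          ← intervalIntegral.integral_const_mul, ← intervalIntegral.integral_add
          (Continuous.intervalIntegrable (by fun_prop) _ _)
          (Continuous.intervalIntegrable (by fun_prop) _ _)]
        have cg' := hg.continuous_deriv le_rfl
        apply intervalIntegral.integral_mono_on (by norm_num)
          (Continuous.intervalIntegrable (by fun_prop) _ _)
          (Continuous.intervalIntegrable (by fun_prop) _ _)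
        intro y _
        have hdd : HasDerivAt (fun y => (χ y : ℂ) * w y)
            (((deriv χ y : ℝ) : ℂ) * w y + (χ y : ℂ) * deriv w y) y :=
          ((hχ.differentiable (by norm_num) y).hasDerivAt.ofReal_comp).mul
            (hw.differentiable (by norm_num) y).hasDerivAt
        rw [hdd.deriv]
        have e1 := chi_abs (1 - lam) δ y hδ
        have e2 := chi_deriv (1 - lam) δ y hδ
        have e3 : ‖((deriv χ y : ℝ) : ℂ) * w y + (χ y : ℂ) * deriv w y‖ ≤
            3 / δ * ‖w y‖ + 1 * ‖deriv w y‖ := by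
          refine (norm_add_le _ _).trans ?_
          rw [norm_mul, norm_mul, Complex.norm_real, Complex.norm_real, Real.norm_eq_abs,
            Real.norm_eq_abs]
          gcongr
        calc _ ≤ (3 / δ * ‖w y‖ + 1 * ‖deriv w y‖) ^ 2 := by gcongr
          _ ≤ 2 * ‖deriv w y‖ ^ 2 + 2 * (3 / δ * ‖w y‖) ^ 2 := by
            nlinarith [sq_nonneg (3 / δ * ‖w y‖ - ‖deriv w y‖)]
          _ = _ := by field_simp; ring
      have i3 := mul_le_mul_of_nonneg_left i1 (sq_nonneg (kabs k₁ k₃))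
      have i4 : 18 / δ ^ 2 * A = 18 * (N / δ) ^ 2 := by rw [← hN2]; field_simp
      have i5 : 5 * N / δ = 5 * (N / δ) := by ring
      have i6 : 0 ≤ N / δ := by positivity
      have i7 : 0 ≤ kabs k₁ k₃ ^ 2 * A := by positivity
      rw [i5]
      have i8 : (2 * H + 5 * (N / δ)) ^ 2 = 4 * H ^ 2 + 20 * (H * (N / δ)) + 25 * (N / δ) ^ 2 := by
        ring
      rw [i8]
      linarith [mul_nonneg hH0 i6, sq_nonneg (N / δ)]
    have hd := hdual _ hg (by simp [h1]) (by simp [h2]) _ h0 hgk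
    have hR : ‖∫ y in (-1:ℝ)..1, ((deriv χ y : ℝ) : ℂ) * (deriv w y * (starRingEnd ℂ) (w y))‖ ≤
        3 / δ * X := by
      rw [hXdef, ← intervalIntegral.integral_const_mul]
      refine intervalIntegral.norm_integral_le_of_norm_le (by norm_num)
        (Filter.Eventually.of_forall fun y _ => ?_)
        (Continuous.intervalIntegrable (by fun_prop) _ _)
      have e2 := chi_deriv (1 - lam) δ y hδ
      rw [norm_mul, norm_mul, RCLike.norm_conj, Complex.norm_real, Real.norm_eq_abs,
        mul_comm ‖deriv w y‖]
      gcongr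
    set R := ∫ y in (-1:ℝ)..1, ((deriv χ y : ℝ) : ℂ) * (deriv w y * (starRingEnd ℂ) (w y))
    set J := ∫ y in (-1:ℝ)..1, F y * (starRingEnd ℂ) ((χ y : ℂ) * w y)
    have him : J.im = k₁ * P + a * δ ^ 4 * R.im := by
      have hh := congrArg Complex.im hid
      rw [hh, ← hPdef]
      simp [← Complex.ofReal_pow, -Complex.ofReal_mul]
    have j1 := (Complex.abs_im_le_norm J).trans hd
    have j2 := (Complex.abs_im_le_norm R).trans hR
    have j3 : a * P ≤ |(k₁:ℝ) * P| := by
      rw [abs_mul, ← ha]; gcongr; exact le_abs_self _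
    have j4 : (k₁:ℝ) * P = J.im - a * δ ^ 4 * R.im := by rw [him]; ring
    have j5 : |J.im - a * δ ^ 4 * R.im| ≤ |J.im| + a * δ ^ 4 * |R.im| := by
      refine (abs_sub _ _).trans ?_
      rw [abs_mul, abs_of_pos (by positivity : 0 < a * δ ^ 4)]
    have j6 : a * δ ^ 4 * |R.im| ≤ a * δ ^ 4 * (3 / δ * X) := by gcongr
    rw [← j4] at j5
    linarith
  -- step 3
  have s3 : A ≤ 2 / δ ^ 2 * P + 21 * δ * X := by
    have b0 := bump_int δ 0 hδ w hw h1 h2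
    have b1 := bump_int δ (√(1 - lam)) hδ w hw h1 h2
    have b2 := bump_int δ (-√(1 - lam)) hδ w hw h1 h2
    have c0 := bump_cont δ 0
    have c1 := bump_cont δ (√(1 - lam))
    have c2 := bump_cont δ (-√(1 - lam))
    have : A ≤ ∫ y in (-1:ℝ)..1, (2 / δ ^ 2 * ((1 - y ^ 2 - lam) * χ y * ‖w y‖ ^ 2) +
        (bump δ 0 y * ‖w y‖ ^ 2 + bump δ (√(1 - lam)) y * ‖w y‖ ^ 2 +
          bump δ (-√(1 - lam)) y * ‖w y‖ ^ 2)) := by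
      apply intervalIntegral.integral_mono_on (by norm_num)
        (Continuous.intervalIntegrable (by fun_prop) _ _)
        (Continuous.intervalIntegrable (by fun_prop) _ _)
      intro y _
      have := mul_le_mul_of_nonneg_right (chi_lower (1 - lam) δ y hδ) (sq_nonneg ‖w y‖)
      rw [one_mul] at this
      refine this.trans (le_of_eq ?_)
      ring
    rw [intervalIntegral.integral_add, intervalIntegral.integral_add,
      intervalIntegral.integral_add, intervalIntegral.integral_const_mul] at this
    · linarith
    all_goals exact Continuous.intervalIntegrable (by fun_prop) _ _
  -- step 4
  have s4 : 27 * (δ * X) ≤ A / 4 + 729 * (δ * H) ^ 2 := by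
    have : 27 * δ * X ≤ 1 / 4 * A + 729 * δ ^ 2 * E := by
      rw [hXdef, hAdef, hEdef, ← intervalIntegral.integral_const_mul,
        ← intervalIntegral.integral_const_mul, ← intervalIntegral.integral_const_mul,
        ← intervalIntegral.integral_add (Continuous.intervalIntegrable (by fun_prop) _ _)
          (Continuous.intervalIntegrable (by fun_prop) _ _)]
      apply intervalIntegral.integral_mono_on (by norm_num)
        (Continuous.intervalIntegrable (by fun_prop) _ _)
        (Continuous.intervalIntegrable (by fun_prop) _ _)
      intro y _
      nlinarith [sq_nonneg (1 / 2 * ‖w y‖ - 27 * δ * ‖deriv w y‖)]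
    have : δ ^ 2 * E ≤ (δ * H) ^ 2 := by
      rw [mul_pow, hH2]; gcongr
      have : 0 ≤ kabs k₁ k₃ ^ 2 * A := by positivity
      linarith
    linarith
  have hMm : M = a * δ ^ 3 * (M / (a * δ ^ 3)) := by field_simp
  set m := M / (a * δ ^ 3) with hmdef
  have hm : 0 ≤ m := by positivity
  have fin := os_algebra ε N (δ * H) m (P / δ ^ 2) A (δ * X) hε hN0 (by positivity) hm hN2.symm
    (by
      rw [hMm] at s1
      have : 0 < a * δ ^ 2 := by positivity
      refine le_of_mul_le_mul_left ?_ this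
      calc _ = a * δ ^ 4 * H ^ 2 := by ring
        _ ≤ _ := s1
        _ = _ := by ring)
    (by
      rw [hMm] at s2
      have : 0 < a * δ ^ 2 := by positivity
      refine le_of_mul_le_mul_left ?_ this
      calc _ = a * P := by field_simp
        _ ≤ _ := s2
        _ = _ := by field_simp)
    (by
      refine s3.trans (le_of_eq ?_)
      ring)
    s4
  rw [hMm]
  have := mul_le_mul_of_nonneg_left fin (by positivity : 0 ≤ a * δ ^ 3)
  linarith

/-- **Resolvent estimate for the Orr–Sommerfeld equation without nonlocal
term, `F₁ ∈ H⁻¹_k`** (Proposition 2.17):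
`ν‖(∂_y,|k|)w‖_{L²} + ν^{3/4}|k₁|^{1/4}‖w‖_{L²} ≤ C‖F₁‖_{H⁻¹_k}`. -/
theorem OS_local_resolvent_Hm1 :
    ∃ ε₀ ν₀ C : ℝ, 0 < ε₀ ∧ ε₀ < 1 ∧ 0 < ν₀ ∧ ν₀ < 1 ∧ 0 < C ∧
      ∀ (ν ε lam : ℝ) (k₁ k₃ : ℤ) (w F₁ : ℝ → ℂ),
        0 < ν → ν ≤ ν₀ → 0 < ε → ε ≤ ε₀ → 1 ≤ |k₁| →
        IntervalIntegrable (fun y => ‖F₁ y‖ ^ 2) MeasureTheory.volume (-1) 1 →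
        OSlocal ν k₁ k₃ lam ε w F₁ →
        ν * hk k₁ k₃ w + ν ^ ((3:ℝ)/4) * |(k₁ : ℝ)| ^ ((1:ℝ)/4) * l2 w
          ≤ C * hm1 k₁ k₃ F₁ := by
  refine ⟨1/6000, 1/2, 100, by norm_num, by norm_num, by norm_num, by norm_num, by norm_num, ?_⟩
  intro ν ε lam k₁ k₃ w F hν _ _ hε hk1 _ ⟨hw, heq, h1, h2⟩
  have ha1 : (1:ℝ) ≤ |(k₁:ℝ)| := by exact_mod_cast hk1
  have ha0 : 0 < |(k₁:ℝ)| := by linarith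
  set a := |(k₁:ℝ)| with ha
  set δ := (ν / a) ^ ((1:ℝ)/4) with hδdef
  have hq : 0 < ν / a := by positivity
  have hδ : 0 < δ := Real.rpow_pos_of_pos hq _
  have hδ4 : δ ^ 4 = ν / a := by
    rw [hδdef, ← Real.rpow_natCast, ← Real.rpow_mul hq.le]; norm_num
  have hν4 : a * δ ^ 4 = ν := by rw [hδ4]; field_simp
  have hsq : √(ν * a) = a * δ ^ 2 := by
    rw [← hν4, show a * δ ^ 4 * a = (a * δ ^ 2) ^ 2 by ring, Real.sqrt_sq (by positivity)]
  have h34 : ν ^ ((3:ℝ)/4) * a ^ ((1:ℝ)/4) = a * δ ^ 3 := by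
    have e1 : ν ^ ((3:ℝ)/4) = a ^ ((3:ℝ)/4) * δ ^ 3 := by
      rw [← hν4, Real.mul_rpow ha0.le (by positivity), ← Real.rpow_natCast δ 4,
        ← Real.rpow_mul hδ.le, ← Real.rpow_natCast δ 3]
      norm_num
    have e2 : a ^ ((3:ℝ)/4) * a ^ ((1:ℝ)/4) = a := by
      rw [← Real.rpow_add ha0]; norm_num
    rw [e1]
    calc _ = (a ^ ((3:ℝ)/4) * a ^ ((1:ℝ)/4)) * δ ^ 3 := by ring
      _ = _ := by rw [e2]
  have := os_main a δ ε lam k₁ k₃ w F ha ha1 hδ hε hw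
    (fun y hy => by rw [hν4, ← hsq]; exact heq y hy) h1 h2
  rw [h34]
  rw [hν4] at this
  exact this

end
end
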